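/- arXiv:math/0210115 — 2 statements merged into one kernel-verified Lean document; each statement's English description precedes it below -/
import Mathlib

section
/- For every odd m ≥ 3 and n ≥ 2, the topological complexity of the configuration space C_n(ℝ^m) of n ordered distinct points in ℝ^m equals 2n − 1. -/
/-- The space of continuous paths `[0,1] → X`, with the compact-open topology. -/
abbrev PathSpace (X : Type*) [TopologicalSpace X] := C(unitInterval, X)

/-- `U ⊆ X × X` admits a continuous section of the path fibration
`π : PX → X × X`, `π(γ) = (γ 0, γ 1)`. -/
def HasMotionPlanningSection (X : Type*) [TopologicalSpace X] (U : Set (X × X)) : Prop :=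
  ∃ s : C(U, PathSpace X), ∀ p : U, s p 0 = (p : X × X).1 ∧ s p 1 = (p : X × X).2

/-- `X × X` can be covered by `k` open sets, over each of which the path
fibration admits a continuous section. -/
def HasTCCover (X : Type*) [TopologicalSpace X] (k : ℕ) : Prop :=
  ∃ U : Fin k → Set (X × X), (∀ i, IsOpen (U i)) ∧ (⋃ i, U i) = Set.univ ∧
    ∀ i, HasMotionPlanningSection X (U i)

/-- The topological complexity of `X` (in the unnormalized convention of Farber,
so that `TopComplexity(point) = 1`), as an extended natural number. -/
noncomputable def TopComplexity (X : Type*) [TopologicalSpace X] : ℕ∞ :=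
  sInf {N : ℕ∞ | ∃ k : ℕ, N = k ∧ HasTCCover X k}

/-- The configuration space of `n` ordered distinct points in `ℝ^m`. -/
abbrev ConfSpace (n m : ℕ) := {f : Fin n → (Fin m → ℝ) // Function.Injective f}

/-!
Upper bound: record for a pair of configurations which of the first coordinates in each of them
agree, and in which order they appear. The number of distinct first coordinates in the two
configurations together takes at most `2n - 1` values, from `2` to `2n`. A pair has an open
neighbourhood of pairs in which the clusters of the given one remain tight compared with the gaps
between them; two such neighbourhoods with the same number of clusters are disjoint or equal, and
on each of them both configurations are moved along straight lines to one and the same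
configuration on a coordinate axis. This uses only `m ≥ 2`.

Lower bound: let `ω_j`, for `1 ≤ j < n`, be the volume form of the sphere of even dimension
`d = m - 1`, pulled back along `z ↦ z_j - z_0`. Over a set with a motion planning section the
classes `ω_j ⊗ 1` and `1 ⊗ ω_j` agree, so for a cover by `2(n - 1)` open sets the product of the
`(1 ⊗ ω_j - ω_j ⊗ 1)²` is exact. As `d` is even, each square equals `-2 ω_j ⊗ ω_j`, and the product
has nonzero integral over a torus of dimension `2(n - 1)d` mapping to the pairs of configurations.
Differential forms are replaced by operators on exterior algebra valued functions on a fine grid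
in that torus, where open covers and homotopies become local conditions, and the contradiction is
the discrete Stokes theorem.
-/

open Topology unitInterval
open scoped NNReal

section MotionPlanning

variable {X : Type*} [TopologicalSpace X]

theorem hasMotionPlanningSection_iff_homotopic {U : Set (X × X)} :
    HasMotionPlanningSection X U ↔
      (ContinuousMap.fst.restrict U).Homotopic (ContinuousMap.snd.restrict U) := by
  constructor
  · rintro ⟨s, hs⟩
    exact ⟨⟨s.uncurry.comp ContinuousMap.prodSwap, fun p => (hs p).1, fun p => (hs p).2⟩⟩
  · rintro ⟨H⟩
    exact ⟨(H.toContinuousMap.comp ContinuousMap.prodSwap).curry,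
      fun p => ⟨H.apply_zero p, H.apply_one p⟩⟩

theorem HasMotionPlanningSection.iUnion {κ : Type*} {V : κ → Set (X × X)}
    (hopen : ∀ i, IsOpen (V i)) (hdisj : ∀ i j, (V i ∩ V j).Nonempty → i = j)
    (h : ∀ i, HasMotionPlanningSection X (V i)) : HasMotionPlanningSection X (⋃ i, V i) := by
  choose s hs using h
  let S : κ → Set (⋃ i, V i) := fun i => Subtype.val ⁻¹' V i
  let φ : ∀ i, C(S i, PathSpace X) := fun i => (s i).comp ⟨fun p => ⟨p.1.1, p.2⟩, by fun_prop⟩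
  have hφ : ∀ i j x (hi : x ∈ S i) (hj : x ∈ S j), φ i ⟨x, hi⟩ = φ j ⟨x, hj⟩ := by
    intro i j x hi hj
    obtain rfl := hdisj i j ⟨x, hi, hj⟩
    rfl
  have hS : ∀ x, ∃ i, S i ∈ 𝓝 x := fun x =>
    (Set.mem_iUnion.1 x.2).imp fun i hi => ((hopen i).preimage continuous_subtype_val).mem_nhds hi
  refine ⟨ContinuousMap.liftCover S φ hφ hS, fun x => ?_⟩
  obtain ⟨i, hi⟩ := Set.mem_iUnion.1 x.2
  have hx : ContinuousMap.liftCover S φ hφ hS x = s i ⟨x, hi⟩ :=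
    ContinuousMap.liftCover_coe (⟨x, hi⟩ : S i)
  rw [hx]
  exact hs i ⟨x, hi⟩

theorem HasTCCover.of_strata {T : Type*} {k : ℕ} (U : T → Set (X × X)) (level : T → Fin k)
    (hopen : ∀ a, IsOpen (U a)) (hcover : ⋃ a, U a = Set.univ)
    (hsection : ∀ a, HasMotionPlanningSection X (U a))
    (hlevel : ∀ a b, level a = level b → (U a ∩ U b).Nonempty → U a = U b) :
    HasTCCover X k := by
  refine ⟨fun c => ⋃ V : {V // ∃ a, level a = c ∧ U a = V}, V.1, fun c => ?_, ?_, fun c => ?_⟩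
  · refine isOpen_iUnion ?_
    rintro ⟨_, a, -, rfl⟩
    exact hopen a
  · refine Set.eq_univ_of_forall fun x => ?_
    obtain ⟨a, ha⟩ := Set.mem_iUnion.1 (hcover ▸ Set.mem_univ x)
    exact Set.mem_iUnion.2 ⟨level a, Set.mem_iUnion.2 ⟨⟨U a, a, rfl, rfl⟩, ha⟩⟩
  · refine HasMotionPlanningSection.iUnion ?_ ?_ ?_
    · rintro ⟨_, a, -, rfl⟩
      exact hopen a
    · rintro ⟨_, a, ha, rfl⟩ ⟨_, b, hb, rfl⟩ h
      exact Subtype.ext (hlevel a b (ha.trans hb.symm) h)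
    · rintro ⟨_, a, -, rfl⟩
      exact hsection a

theorem HasTCCover.mono {k l : ℕ} (hkl : k ≤ l) (h : HasTCCover X k) : HasTCCover X l := by
  obtain ⟨U, hopen, hcover, hsection⟩ := h
  have hempty : HasMotionPlanningSection X ∅ := by
    rw [← Set.iUnion_of_empty fun i : Empty => (i.elim : Set (X × X))]
    exact HasMotionPlanningSection.iUnion nofun nofun nofun
  let V : ℕ → Set (X × X) := fun i => if hi : i < k then U ⟨i, hi⟩ else ∅
  have hV : ∀ i, V (Fin.castLE hkl i) = U i := fun i => dif_pos i.2
  refine ⟨fun i => V i, fun i => ?_, ?_, fun i => ?_⟩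
  · by_cases hi : (i : ℕ) < k
    · simpa only [V, dif_pos hi] using hopen _
    · simp only [V, dif_neg hi, isOpen_empty]
  · refine Set.eq_univ_of_forall fun x => ?_
    obtain ⟨i, hi⟩ := Set.mem_iUnion.1 (hcover ▸ Set.mem_univ x)
    exact Set.mem_iUnion.2 ⟨Fin.castLE hkl i, (hV i).symm ▸ hi⟩
  · by_cases hi : (i : ℕ) < k
    · simpa only [V, dif_pos hi] using hsection _
    · simpa only [V, dif_neg hi] using hempty

end MotionPlanning

/-! ### Clusters of coordinates -/

section Clusters

open Finset Function

theorem card_image_le_of_factorsThrough {α β γ : Type*} [DecidableEq β] [DecidableEq γ]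
    {s : Finset α} {f : α → β} {g : α → γ} (h : g.FactorsThrough f) :
    #(s.image g) ≤ #(s.image f) := by
  rcases isEmpty_or_nonempty α with hα | ⟨⟨a⟩⟩
  · simp [s.eq_empty_of_isEmpty]
  have : s.image g = (s.image f).image (extend f g fun _ => g a) := by
    rw [image_image]
    exact image_congr fun i _ => (h.extend_apply _ i).symm
  exact this ▸ card_image_le

theorem factorsThrough_of_card_image_le {α β γ : Type*} [Fintype α] [DecidableEq β]
    [DecidableEq γ] {f : α → β} {g : α → γ} (h : g.FactorsThrough f)
    (hcard : #(univ.image f) ≤ #(univ.image g)) : f.FactorsThrough g := by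
  intro i j hij
  set φ : β → γ := extend f g fun _ => g i
  have hφ : ∀ k, φ (f k) = g k := h.extend_apply _
  have himage : (univ.image f).image φ = univ.image g := by
    rw [image_image]
    exact image_congr fun k _ => hφ k
  refine card_image_iff.1 (card_image_le.antisymm (himage ▸ hcard)) ?_ ?_ ?_
  · simp
  · simp
  · rw [hφ, hφ, hij]

theorem exists_embedding_refining {n : ℕ} {α : Type*} [LinearOrder α] (a : Fin n → α) :
    ∃ τ : Fin n ↪ ℝ, ∀ k l, τ k < τ l → a k ≤ a l := by
  refine ⟨⟨fun k => ((Tuple.sort a).symm k : ℕ), fun k l h => ?_⟩, fun k l h => ?_⟩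
  · exact (Tuple.sort a).symm.injective (Fin.ext (Nat.cast_injective h))
  · have := Tuple.monotone_sort a (Fin.le_def.2 (Nat.cast_lt.1 h).le)
    simpa using this

variable {S α : Type*} {a b x : S → α → ℝ}

/-- The neighbourhood of a family `a` of real tuples consisting of those families `x` whose
tuples are ordered compatibly with those of `a`, and in which entries that agree in `a` (they
form a cluster) are closer to each other than any two entries of a tuple that differ in `a`. -/
def clusterRegion (a : S → α → ℝ) : Set (S → α → ℝ) :=
  {x | (∀ s k l, a s k < a s l → x s k < x s l) ∧
    ∀ s k l, a s k = a s l → ∀ s' k' l', a s' k' ≠ a s' l' →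
      |x s k - x s l| < |x s' k' - x s' l'|}

theorem mem_clusterRegion_self (a : S → α → ℝ) : a ∈ clusterRegion a := by
  refine ⟨fun _ _ _ => id, fun s k l h s' k' l' h' => ?_⟩
  rw [h, sub_self, abs_zero]
  exact abs_pos.2 (sub_ne_zero.2 h')

theorem isOpen_clusterRegion [Finite S] [Finite α] (a : S → α → ℝ) : IsOpen (clusterRegion a) := by
  simp only [clusterRegion, Set.ofPred_and, Set.ofPred_forall]
  refine IsOpen.inter ?_ ?_
  · iterate 4 refine isOpen_iInter_of_finite fun _ => ?_
    exact isOpen_lt (by fun_prop) (by fun_prop)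
  · iterate 8 refine isOpen_iInter_of_finite fun _ => ?_
    exact isOpen_lt (by fun_prop) (by fun_prop)

theorem clusterRegion_congr (h : ∀ s k l, a s k < a s l ↔ b s k < b s l) :
    clusterRegion a = clusterRegion b := by
  have heq : ∀ s k l, a s k = a s l ↔ b s k = b s l := fun s k l =>
    eq_iff_eq_of_lt_iff_lt_of_gt_iff_gt (h s k l) (h s l k)
  simp only [clusterRegion, h, heq, ne_eq]

/-- The total number of clusters of a family of tuples. -/
noncomputable def clusterCount [Fintype S] [Fintype α] (a : S → α → ℝ) : ℕ :=
  ∑ s, #(univ.image (a s))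

theorem factorsThrough_or_factorsThrough_of_mem_clusterRegion (ha : x ∈ clusterRegion a)
    (hb : x ∈ clusterRegion b) :
    (∀ s, (b s).FactorsThrough (a s)) ∨ ∀ s, (a s).FactorsThrough (b s) := by
  by_contra! hcon
  obtain ⟨⟨s, hs⟩, s', hs'⟩ := hcon
  simp only [FactorsThrough, not_forall] at hs hs'
  obtain ⟨k, l, hkl, hkl'⟩ := hs
  obtain ⟨k', l', hkl₁, hkl₁'⟩ := hs'
  exact (ha.2 s k l hkl s' k' l' hkl₁').asymm (hb.2 s' k' l' hkl₁ s k l hkl')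

theorem factorsThrough_of_clusterCount_eq [Fintype S] [Fintype α]
    (h : ∀ s, (b s).FactorsThrough (a s)) (hcount : clusterCount a = clusterCount b) (s : S) :
    (a s).FactorsThrough (b s) := by
  have hle : ∀ s ∈ univ, #(univ.image (b s)) ≤ #(univ.image (a s)) := fun s _ =>
    card_image_le_of_factorsThrough (h s)
  exact factorsThrough_of_card_image_le (h s)
    ((sum_eq_sum_iff_of_le hle).1 hcount.symm s (mem_univ s)).ge

theorem lt_of_mem_clusterRegion (ha : x ∈ clusterRegion a) (hb : x ∈ clusterRegion b)
    {s : S} (h : (a s).FactorsThrough (b s)) {k l : α} (hkl : a s k < a s l) : b s k < b s l := by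
  rcases lt_trichotomy (b s k) (b s l) with hlt | heq | hgt
  · exact hlt
  · exact absurd (h heq) hkl.ne
  · exact absurd (ha.1 s k l hkl) (hb.1 s l k hgt).not_gt

theorem lt_iff_lt_of_clusterCount_eq [Fintype S] [Fintype α] (ha : x ∈ clusterRegion a)
    (hb : x ∈ clusterRegion b) (hcount : clusterCount a = clusterCount b) (s : S) (k l : α) :
    a s k < a s l ↔ b s k < b s l := by
  have hboth : (∀ s, (b s).FactorsThrough (a s)) ∧ ∀ s, (a s).FactorsThrough (b s) := by
    rcases factorsThrough_or_factorsThrough_of_mem_clusterRegion ha hb with h | h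
    · exact ⟨h, factorsThrough_of_clusterCount_eq h hcount⟩
    · exact ⟨factorsThrough_of_clusterCount_eq h hcount.symm, h⟩
  exact ⟨lt_of_mem_clusterRegion ha hb (hboth.2 s), lt_of_mem_clusterRegion hb ha (hboth.1 s)⟩

theorem clusterCount_le [Fintype S] [Fintype α] (a : S → α → ℝ) :
    clusterCount a ≤ Fintype.card S * Fintype.card α :=
  sum_le_card_nsmul _ _ _ fun _ _ => card_image_le

theorem card_le_clusterCount [Fintype S] [Fintype α] [Nonempty α] (a : S → α → ℝ) :
    Fintype.card S ≤ clusterCount a := by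
  simpa [clusterCount] using card_nsmul_le_sum univ (fun s => #(univ.image (a s))) 1 fun s _ =>
    card_pos.2 (univ_nonempty.image _)

end Clusters

/-! ### Configurations on an axis -/

section UpperBound

open AffineMap

theorem homotopic_of_lineMap_mem {Y E : Type*} [TopologicalSpace Y] [AddCommGroup E] [Module ℝ E]
    [TopologicalSpace E] [IsTopologicalAddGroup E] [ContinuousSMul ℝ E] {p : E → Prop}
    {f g : C(Y, {x // p x})} (h : ∀ y, ∀ t ∈ I, p (lineMap (f y).1 (g y).1 t)) :
    f.Homotopic g :=
  ⟨⟨⟨fun q => ⟨lineMap (f q.2).1 (g q.2).1 (q.1 : ℝ), h q.2 q.1 q.1.2⟩, by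
      simp only [lineMap_apply_module']
      fun_prop⟩, by simp, by simp⟩⟩

variable {n m d : ℕ}

/-- The configuration of the points with coordinates `τ k` on the `i`-th coordinate axis. -/
def axisConf (i : Fin m) (τ : Fin n ↪ ℝ) : ConfSpace n m :=
  ⟨fun k => Pi.single i (τ k), (Pi.single_injective i).comp τ.injective⟩

theorem homotopic_axisConf {Y : Type*} [TopologicalSpace Y] {f : C(Y, ConfSpace n m)} (i : Fin m)
    (τ : Fin n ↪ ℝ) (h : ∀ y k l, τ k < τ l →
      (f y).1 k i < (f y).1 l i ∨ ∃ j ≠ i, (f y).1 k j ≠ (f y).1 l j) :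
    f.Homotopic (ContinuousMap.const Y (axisConf i τ)) := by
  refine homotopic_of_lineMap_mem fun y t ht => ?_
  have hne : ∀ k l, τ k < τ l → lineMap (f y).1 (axisConf i τ).1 t k ≠
      lineMap (f y).1 (axisConf i τ).1 t l := by
    intro k l hτ heq
    have hcoord : ∀ j, lineMap ((f y).1 k j) ((axisConf i τ).1 k j) t =
        lineMap ((f y).1 l j) ((axisConf i τ).1 l j) t := fun j => by
      simpa only [pi_lineMap_apply] using congrFun heq j
    rcases h y k l hτ with hlt | ⟨j, hj, hne⟩
    · refine (lineMap_strict_mono_endpoints hlt ?_ ht.1 ht.2).ne (hcoord i)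
      simpa [axisConf] using hτ
    · rcases eq_or_ne t 1 with rfl | ht
      · simpa [axisConf, hτ.ne] using hcoord i
      · refine hne (mul_left_cancel₀ (sub_ne_zero.2 ht.symm) ?_)
        simpa [axisConf, hj, lineMap_apply_ring] using hcoord j
  intro k l hkl
  by_contra hne'
  rcases (τ.injective.ne hne').lt_or_gt with hτ | hτ
  · exact hne k l hτ hkl
  · exact hne l k hτ hkl.symm

theorem ConfSpace.continuous_coord (k : Fin n) (i : Fin m) :
    Continuous fun z : ConfSpace n m => z.1 k i :=
  (continuous_apply_apply k i).comp continuous_subtype_val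

/-- The first coordinates of the points of two configurations. -/
def firstCoords (p : ConfSpace n (d + 2) × ConfSpace n (d + 2)) (s : Bool) (k : Fin n) : ℝ :=
  (if s then p.1 else p.2).1 k 0

theorem continuous_firstCoords :
    Continuous (firstCoords : ConfSpace n (d + 2) × ConfSpace n (d + 2) → Bool → Fin n → ℝ) := by
  refine continuous_pi fun s => continuous_pi fun k => ?_
  cases s
  · exact (ConfSpace.continuous_coord k 0).comp continuous_snd
  · exact (ConfSpace.continuous_coord k 0).comp continuous_fst

/-- The configurations whose points are separated by the coordinates other than the first one
whenever the corresponding entries of `a` agree. -/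
def separatedConf (a : Fin n → ℝ) : Set (ConfSpace n (d + 2)) :=
  {z | ∀ k l, k ≠ l → a k = a l → ∃ i ≠ 0, z.1 k i ≠ z.1 l i}

theorem isOpen_separatedConf (a : Fin n → ℝ) :
    IsOpen (separatedConf a : Set (ConfSpace n (d + 2))) := by
  have heq : (separatedConf a : Set (ConfSpace n (d + 2))) =
      ⋂ (k) (l) (_ : k ≠ l ∧ a k = a l), ⋃ i ≠ 0, {z | z.1 k i ≠ z.1 l i} := by
    ext z
    simp [separatedConf]
  rw [heq]
  iterate 3 refine isOpen_iInter_of_finite fun _ => ?_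
  exact isOpen_biUnion fun i _ =>
    isOpen_ne_fun (ConfSpace.continuous_coord _ i) (ConfSpace.continuous_coord _ i)

theorem mem_separatedConf_self (z : ConfSpace n (d + 2)) :
    z ∈ separatedConf fun k => z.1 k 0 := by
  refine fun k l hkl h0 => ?_
  by_contra! hc
  refine hkl (z.2 (funext fun i => ?_))
  rcases eq_or_ne i 0 with rfl | hi
  exacts [h0, hc i hi]

theorem homotopic_const_axisConf {Y : Type*} [TopologicalSpace Y] (a : Fin n → ℝ)
    (f : C(Y, ConfSpace n (d + 2))) (hlt : ∀ y k l, a k < a l → (f y).1 k 0 < (f y).1 l 0)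
    (hsep : ∀ y, f y ∈ separatedConf a) (τ : Fin n ↪ ℝ) :
    f.Homotopic (ContinuousMap.const Y (axisConf 1 τ)) := by
  obtain ⟨τ₀, hτ₀⟩ := exists_embedding_refining a
  refine (homotopic_axisConf 0 τ₀ fun y k l hkl => ?_).trans
    (homotopic_axisConf 1 τ fun y k l hkl => Or.inr ⟨0, zero_ne_one, ?_⟩)
  · exact (hτ₀ k l hkl).lt_or_eq.imp (hlt y k l) (hsep y k l (ne_of_apply_ne τ₀ hkl.ne))
  · simpa [axisConf] using ne_of_apply_ne τ hkl.ne

/-- The pairs of configurations having the clusters of first coordinates of the pair `p`. -/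
def clusterNhd (p : ConfSpace n (d + 2) × ConfSpace n (d + 2)) :
    Set (ConfSpace n (d + 2) × ConfSpace n (d + 2)) :=
  firstCoords ⁻¹' clusterRegion (firstCoords p) ∩
    separatedConf (firstCoords p true) ×ˢ separatedConf (firstCoords p false)

theorem isOpen_clusterNhd (p : ConfSpace n (d + 2) × ConfSpace n (d + 2)) :
    IsOpen (clusterNhd p) :=
  ((isOpen_clusterRegion _).preimage continuous_firstCoords).inter
    ((isOpen_separatedConf _).prod (isOpen_separatedConf _))

theorem mem_clusterNhd_self (p : ConfSpace n (d + 2) × ConfSpace n (d + 2)) : p ∈ clusterNhd p :=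
  ⟨mem_clusterRegion_self _, mem_separatedConf_self _, mem_separatedConf_self _⟩

theorem hasMotionPlanningSection_clusterNhd (p : ConfSpace n (d + 2) × ConfSpace n (d + 2)) :
    HasMotionPlanningSection (ConfSpace n (d + 2)) (clusterNhd p) := by
  let τ : Fin n ↪ ℝ := ⟨fun k => (k : ℕ), Nat.cast_injective.comp Fin.val_injective⟩
  refine hasMotionPlanningSection_iff_homotopic.2 (.trans (g := .const _ (axisConf 1 τ)) ?_ ?_)
  · exact homotopic_const_axisConf (firstCoords p true) _ (fun q => q.2.1.1 true)
      (fun q => q.2.2.1) τ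
  · exact (homotopic_const_axisConf (firstCoords p false) _ (fun q => q.2.1.1 false)
      (fun q => q.2.2.2) τ).symm

theorem clusterNhd_eq_of_clusterCount_eq {p q : ConfSpace n (d + 2) × ConfSpace n (d + 2)}
    (hcount : clusterCount (firstCoords p) = clusterCount (firstCoords q))
    (hne : (clusterNhd p ∩ clusterNhd q).Nonempty) : clusterNhd p = clusterNhd q := by
  obtain ⟨x, hp, hq⟩ := hne
  have hlt := lt_iff_lt_of_clusterCount_eq hp.1 hq.1 hcount
  have heq : ∀ s k l, firstCoords p s k = firstCoords p s l ↔
      firstCoords q s k = firstCoords q s l := fun s k l =>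
    eq_iff_eq_of_lt_iff_lt_of_gt_iff_gt (hlt s k l) (hlt s l k)
  have hsep : ∀ s, (separatedConf (firstCoords p s) : Set (ConfSpace n (d + 2))) =
      separatedConf (firstCoords q s) := fun s => by
    simp only [separatedConf, heq]
  rw [clusterNhd, clusterNhd, clusterRegion_congr hlt, hsep, hsep]

theorem hasTCCover_confSpace [NeZero n] : HasTCCover (ConfSpace n (d + 2)) (2 * n - 1) := by
  have hlower (p : ConfSpace n (d + 2) × ConfSpace n (d + 2)) :
      2 ≤ clusterCount (firstCoords p) := by
    simpa using card_le_clusterCount (firstCoords p)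
  have hupper (p : ConfSpace n (d + 2) × ConfSpace n (d + 2)) :
      clusterCount (firstCoords p) ≤ 2 * n := by
    simpa using clusterCount_le (firstCoords p)
  refine HasTCCover.of_strata clusterNhd
    (fun p => ⟨clusterCount (firstCoords p) - 2, by have := hlower p; have := hupper p; omega⟩)
    isOpen_clusterNhd (Set.eq_univ_of_forall fun p => Set.mem_iUnion.2 ⟨p, mem_clusterNhd_self p⟩)
    hasMotionPlanningSection_clusterNhd fun p q hpq => clusterNhd_eq_of_clusterCount_eq ?_
  have := hlower p
  have := hlower q
  simp only [Fin.mk.injEq] at hpq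
  omega

end UpperBound

/-! ### Graded commutators -/

section GradedCommutators

variable {A : Type*} [Ring A] {a w Θ x y : A}

theorem semiconjBy_list_prod {l : List A} (h : ∀ x ∈ l, SemiconjBy x a (-a)) :
    SemiconjBy l.prod a ((-1 : ℤˣ) ^ l.length • a) := by
  induction l with
  | nil => simp
  | cons x l ih =>
    rw [List.forall_mem_cons] at h
    rw [List.prod_cons, List.length_cons, pow_succ, mul_smul, Units.neg_smul, one_smul]
    exact (h.1.smul_right _).mul_left (ih h.2)

theorem semiconjBy_bracket (hΘ : Θ * Θ = 0) (f : A) : SemiconjBy (Θ * f - f * Θ) Θ (-Θ) := by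
  rw [SemiconjBy, sub_mul, mul_assoc f, hΘ, neg_mul, mul_sub, ← mul_assoc Θ Θ, hΘ]
  simp [mul_assoc]

/-- The even closed elements of a ring with an odd element `Θ`, whose graded commutators are
the differential. An element is considered even or odd if it commutes or anticommutes with `w`. -/
def evenCocycles (w Θ : A) : Subring A := Subring.centralizer {w, Θ}

theorem mem_evenCocycles : x ∈ evenCocycles w Θ ↔ Commute w x ∧ Commute Θ x := by
  simp [evenCocycles, Subring.mem_centralizer_iff, Commute, SemiconjBy]

/-- The differentials `Θ * η + η * Θ` of odd elements. -/
def evenCoboundaries (w Θ : A) : AddSubgroup A where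
  carrier := {x | ∃ η, SemiconjBy η w (-w) ∧ Θ * η + η * Θ = x}
  zero_mem' := ⟨0, by simp [SemiconjBy], by simp⟩
  add_mem' := by
    rintro _ _ ⟨η, hη, rfl⟩ ⟨ζ, hζ, rfl⟩
    exact ⟨η + ζ, hη.add_left hζ, by noncomm_ring⟩
  neg_mem' := by
    rintro _ ⟨η, hη, rfl⟩
    exact ⟨-η, hη.neg_left, by noncomm_ring⟩

theorem mul_mem_evenCoboundaries (hx : x ∈ evenCocycles w Θ) (hy : y ∈ evenCoboundaries w Θ) :
    x * y ∈ evenCoboundaries w Θ := by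
  obtain ⟨hw, hΘ⟩ := mem_evenCocycles.1 hx
  obtain ⟨η, hη, rfl⟩ := hy
  refine ⟨x * η, SemiconjBy.mul_left hw.symm.neg_right hη, ?_⟩
  rw [mul_add, ← mul_assoc, ← mul_assoc, hΘ.eq, mul_assoc x η]

theorem mem_evenCoboundaries_mul (hx : x ∈ evenCoboundaries w Θ) (hy : y ∈ evenCocycles w Θ) :
    x * y ∈ evenCoboundaries w Θ := by
  obtain ⟨hw, hΘ⟩ := mem_evenCocycles.1 hy
  obtain ⟨η, hη, rfl⟩ := hx
  refine ⟨η * y, SemiconjBy.mul_left hη hw.symm, ?_⟩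
  rw [add_mul, mul_assoc η y, ← hΘ.eq]
  noncomm_ring

theorem list_prod_sub_mem_evenCoboundaries {κ : Type*} {l : List κ} {f g : κ → A}
    (hf : ∀ k ∈ l, f k ∈ evenCocycles w Θ) (hg : ∀ k ∈ l, g k ∈ evenCocycles w Θ)
    (hfg : ∀ k ∈ l, f k - g k ∈ evenCoboundaries w Θ) :
    (l.map f).prod - (l.map g).prod ∈ evenCoboundaries w Θ := by
  induction l with
  | nil => simp
  | cons k l ih =>
    rw [List.forall_mem_cons] at hf hg hfg
    have hprod : (l.map f).prod ∈ evenCocycles w Θ := list_prod_mem (by simpa using hf.2)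
    have hsplit : f k * (l.map f).prod - g k * (l.map g).prod =
        (f k - g k) * (l.map f).prod + g k * ((l.map f).prod - (l.map g).prod) := by
      noncomm_ring
    rw [List.map_cons, List.map_cons, List.prod_cons, List.prod_cons, hsplit]
    exact add_mem (mem_evenCoboundaries_mul hfg.1 hprod)
      (mul_mem_evenCoboundaries hg.1 (ih hf.2 hg.2 hfg.2))

-- Up to a sign, the element is the differential of `x * g * y * χ`: the terms in which `Θ`
-- passes `x` and `y` cancel, and the one in which it passes `χ` vanishes by assumption.
theorem mul_bracket_mul_mem_evenCoboundaries {g χ : A} {ε : ℤˣ}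
    (hxw : SemiconjBy x w (ε • w)) (hyw : SemiconjBy y w (-ε • w))
    (hgw : Commute g w) (hχw : Commute χ w)
    (hx : SemiconjBy x Θ (ε • Θ)) (hy : SemiconjBy y Θ (-ε • Θ))
    (h : x * g * y * (Θ * χ - χ * Θ) = 0) :
    x * (Θ * g - g * Θ) * y * χ ∈ evenCoboundaries w Θ := by
  have hgχ : x * g * y * Θ * χ = x * g * y * χ * Θ := by
    simpa only [mul_sub, sub_eq_zero, mul_assoc] using h
  have hxΘ : ε • (Θ * x) = x * Θ := by rw [hx.eq, smul_mul_assoc]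
  have hyΘ : ε • (y * Θ) = -(Θ * y) := by
    rw [hy.eq, smul_mul_assoc, smul_smul, mul_neg, Int.units_mul_self, Units.neg_smul, one_smul]
  refine ⟨ε • (x * g * y * χ), SemiconjBy.smul_left ?_ ε, ?_⟩
  · have hxy := ((hxw.mul_left hgw).smul_right (-ε)).mul_left hyw
    rw [smul_smul, neg_mul, Int.units_mul_self, Units.neg_smul, one_smul] at hxy
    exact hxy.mul_left hχw
  · calc Θ * ε • (x * g * y * χ) + ε • (x * g * y * χ) * Θ
        = ε • (Θ * x) * g * y * χ + x * g * (ε • (y * Θ)) * χ := by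
          simp only [mul_smul_comm, smul_mul_assoc, ← mul_assoc, hgχ]
      _ = x * (Θ * g - g * Θ) * y * χ := by
          rw [hxΘ, hyΘ]
          noncomm_ring

end GradedCommutators

/-! ### Discrete differential forms -/

/-- Operators on functions with values in the exterior algebra. Discrete differential forms on
the abelian group `V` with coefficients in `R` are realised as such operators, which makes their
product associative. -/
abbrev FormOp (R ι V : Type*) [CommRing R] := Module.End R (V → ExteriorAlgebra R (ι → R))

namespace FormOp

variable {R ι V : Type*} [CommRing R]

/-- Functions, acting as forms of degree zero by multiplication. -/
def fn : (V → R) →ₐ[R] FormOp R ι V := Algebra.lsmul R R _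

@[simp]
theorem fn_apply (f : V → R) (φ : V → ExteriorAlgebra R (ι → R)) (v : V) :
    (fn f : FormOp R ι V) φ v = f v • φ v := rfl

variable [DecidableEq ι]

/-- The generator of the exterior algebra in direction `i`. -/
noncomputable def covec (R : Type*) [CommRing R] (i : ι) : ExteriorAlgebra R (ι → R) :=
  ExteriorAlgebra.ι R (Pi.single i 1)

theorem covec_mul_self (i : ι) : covec R i * covec R i = 0 :=
  ExteriorAlgebra.ι_sq_zero _

theorem covec_mul_covec (i j : ι) : covec R i * covec R j = -(covec R j * covec R i) :=
  eq_neg_of_add_eq_zero_left (ExteriorAlgebra.ι_add_mul_swap _ _)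

section Theta

variable (R) [AddCommGroup V] (e : ι → V)

/-- Shift in direction `i` followed by exterior multiplication by the `i`-th generator. -/
noncomputable def theta (i : ι) : FormOp R ι V :=
  LinearMap.mulLeft R (fun _ => covec R i) ∘ₗ LinearMap.funLeft R _ (· + e i)

@[simp]
theorem theta_apply (i : ι) (φ : V → ExteriorAlgebra R (ι → R)) (v : V) :
    theta R e i φ v = covec R i * φ (v + e i) := rfl

theorem theta_mul_theta (i j : ι) :
    theta R e i * theta R e j = -(theta R e j * theta R e i) := by
  ext φ v
  simp only [Module.End.mul_apply, theta_apply, LinearMap.neg_apply, Pi.neg_apply]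
  rw [← mul_assoc, covec_mul_covec, ← mul_assoc, neg_mul, add_right_comm]

theorem theta_mul_self (i : ι) : theta R e i * theta R e i = 0 := by
  ext φ v
  simp [← mul_assoc, covec_mul_self]

variable {R} in
theorem theta_mul_fn (i : ι) (f : V → R) :
    theta R e i * fn f = fn (fun v => f (v + e i)) * theta R e i := by
  ext φ v
  simp

end Theta

variable [Fintype ι]

variable (R ι) in
/-- The sum of all generators of the exterior algebra. -/
noncomputable def covecSum : ExteriorAlgebra R (ι → R) := ∑ i, covec R i

variable (R ι V) in
/-- Exterior multiplication by the sum of all generators. It commutes with the even and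
anticommutes with the odd forms. -/
noncomputable def wedge : FormOp R ι V := LinearMap.mulLeft R fun _ => covecSum R ι

@[simp]
theorem wedge_apply (φ : V → ExteriorAlgebra R (ι → R)) (v : V) :
    wedge R ι V φ v = covecSum R ι * φ v := rfl

theorem commute_fn_wedge (f : V → R) : Commute (fn f) (wedge R ι V) := by
  ext φ v
  simp

variable (R) [AddCommGroup V] (e : ι → V)

theorem semiconjBy_theta_wedge (i : ι) :
    SemiconjBy (theta R e i) (wedge R ι V) (-wedge R ι V) := by
  ext φ v
  have h : covec R i * covecSum R ι = -(covecSum R ι * covec R i) := by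
    simp only [covecSum, Finset.mul_sum, Finset.sum_mul, ← Finset.sum_neg_distrib,
      covec_mul_covec i]
  simp [← mul_assoc, h]

/-- The odd form whose graded commutators are the differential. -/
noncomputable def thetaSum : FormOp R ι V := ∑ i, theta R e i

theorem thetaSum_mul_self : thetaSum R e * thetaSum R e = 0 := by
  rw [thetaSum, Finset.sum_mul_sum, ← Finset.sum_product', Finset.univ_product_univ]
  refine Finset.sum_involution (fun p _ => p.swap) (fun p _ => ?_) (fun p _ h hp => h ?_)
    (fun _ _ => Finset.mem_univ _) (fun p _ => p.swap_swap)
  · exact eq_neg_iff_add_eq_zero.1 (theta_mul_theta R e p.1 p.2)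
  · rw [← congrArg Prod.snd hp]
    exact theta_mul_self R e p.1

theorem semiconjBy_thetaSum_wedge : SemiconjBy (thetaSum R e) (wedge R ι V) (-wedge R ι V) := by
  simp only [SemiconjBy, thetaSum, Finset.sum_mul, Finset.mul_sum]
  exact Finset.sum_congr rfl fun i _ => semiconjBy_theta_wedge R e i

/-- The even cocycles among the discrete differential forms. -/
noncomputable abbrev cocycles : Subring (FormOp R ι V) := evenCocycles (wedge R ι V) (thetaSum R e)

/-- The coboundaries of odd discrete differential forms. -/
noncomputable abbrev coboundaries : AddSubgroup (FormOp R ι V) :=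
  evenCoboundaries (wedge R ι V) (thetaSum R e)

variable {R}

/-- The differential of a function. -/
noncomputable def dfn (f : V → R) : FormOp R ι V := thetaSum R e * fn f - fn f * thetaSum R e

theorem dfn_eq_sum (f : V → R) :
    (dfn e f : FormOp R ι V) = ∑ i, fn (fun v => f (v + e i) - f v) * theta R e i := by
  simp only [dfn, thetaSum, Finset.sum_mul, Finset.mul_sum, ← Finset.sum_sub_distrib]
  refine Finset.sum_congr rfl fun i _ => ?_
  rw [theta_mul_fn, ← sub_mul, ← map_sub]
  rfl

theorem dfn_apply (f : V → R) (φ : V → ExteriorAlgebra R (ι → R)) (v : V) :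
    dfn e f φ v = ∑ i, (f (v + e i) - f v) • (covec R i * φ (v + e i)) := by
  simp [dfn_eq_sum]

theorem dfn_sub (f g : V → R) : (dfn e (f - g) : FormOp R ι V) = dfn e f - dfn e g := by
  simp only [dfn, map_sub, mul_sub, sub_mul]
  abel

theorem semiconjBy_dfn_wedge (f : V → R) : SemiconjBy (dfn e f) (wedge R ι V) (-wedge R ι V) := by
  have h := semiconjBy_thetaSum_wedge R e
  have hf := commute_fn_wedge (ι := ι) f
  exact (h.mul_left hf).sub_left (SemiconjBy.mul_left hf.neg_right h)

theorem semiconjBy_dfn_thetaSum (f : V → R) :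
    SemiconjBy (dfn e f) (thetaSum R e) (-thetaSum R e) :=
  semiconjBy_bracket (thetaSum_mul_self R e) (fn f)

-- Discrete Stokes theorem. On the constant form `1` the operators `wedge` and `thetaSum` agree.
theorem sum_apply_one_of_mem_coboundaries [Fintype V] {x : FormOp R ι V}
    (hx : x ∈ coboundaries R e) : ∑ v, x 1 v = 0 := by
  obtain ⟨η, hη, rfl⟩ := hx
  have hone : thetaSum R e 1 = wedge R ι V 1 := by
    ext v
    simp [thetaSum, covecSum, LinearMap.sum_apply, Finset.sum_apply]
  have hright : ∀ v, (η * thetaSum R e) 1 v = -(covecSum R ι * η 1 v) := fun v => by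
    rw [Module.End.mul_apply, hone, ← Module.End.mul_apply, hη.eq]
    simp
  have hleft : ∑ v, (thetaSum R e * η) 1 v = ∑ v, covecSum R ι * η 1 v := by
    simp only [Module.End.mul_apply, thetaSum, LinearMap.sum_apply, Finset.sum_apply, theta_apply,
      covecSum, Finset.sum_mul]
    rw [Finset.sum_comm, Finset.sum_comm (s := .univ (α := V))]
    exact Finset.sum_congr rfl fun i _ =>
      Equiv.sum_comp (Equiv.addRight (e i)) fun v => covec R i * η 1 v
  simp only [LinearMap.add_apply, Pi.add_apply, Finset.sum_add_distrib, hleft, hright,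
    Finset.sum_neg_distrib, add_neg_cancel]

/-- The form `df₁ ⋯ df_d · χ`. -/
noncomputable def cochain (l : List (V → R)) (χ : V → R) : FormOp R ι V :=
  (l.map (dfn e)).prod * fn χ

variable {e}

theorem semiconjBy_prod_dfn_wedge (l : List (V → R)) : SemiconjBy (l.map (dfn e)).prod
    (wedge R ι V) ((-1 : ℤˣ) ^ l.length • wedge R ι V) := by
  simpa using semiconjBy_list_prod (l := l.map (dfn e))
    (List.forall_mem_map.2 fun f _ => semiconjBy_dfn_wedge e f)

theorem semiconjBy_prod_dfn_thetaSum (l : List (V → R)) : SemiconjBy (l.map (dfn e)).prod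
    (thetaSum R e) ((-1 : ℤˣ) ^ l.length • thetaSum R e) := by
  simpa using semiconjBy_list_prod (l := l.map (dfn e))
    (List.forall_mem_map.2 fun f _ => semiconjBy_dfn_thetaSum e f)

end FormOp

section Propagation

open Metric

variable {R M V : Type*} [Semiring R] [AddCommMonoid M] [Module R M]

/-- All functions in the range of the operator `x` vanish at `v`. -/
def VanishesAt (x : Module.End R (V → M)) (v : V) : Prop := ∀ φ, x φ v = 0

variable [PseudoMetricSpace V] {κ : ℝ≥0}

/-- The operator `x` has propagation at most `κ`: the value of `x φ` at `v` depends on the values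
of `φ` at distance at most `κ` from `v` only. -/
def PropagationLE (κ : ℝ≥0) (x : Module.End R (V → M)) : Prop :=
  ∀ φ v, (∀ u ∈ closedBall v κ, φ u = 0) → x φ v = 0

theorem vanishesAt_list_prod {l : List (Module.End R (V → M))}
    (hl : ∀ x ∈ l, PropagationLE κ x) {v : V}
    (h : ∃ x ∈ l, ∀ u ∈ closedBall v (l.length * κ), VanishesAt x u) : VanishesAt l.prod v := by
  induction l generalizing v with
  | nil => simp at h
  | cons a l ih =>
    rw [List.forall_mem_cons] at hl
    intro φ
    rw [List.prod_cons, Module.End.mul_apply]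
    obtain ⟨x, hx, hxu⟩ := h
    rcases List.mem_cons.1 hx with rfl | hx
    · exact hxu v (mem_closedBall_self (by positivity)) _
    · refine hl.1 _ v fun u hu => ih hl.2 ⟨x, hx, fun w hw => hxu w ?_⟩ φ
      rw [mem_closedBall] at hu hw ⊢
      rw [List.length_cons]
      push_cast
      linarith [dist_triangle w u v]

end Propagation

namespace FormOp

open Metric

variable {R ι V : Type*} [PseudoMetricSpace V] {κ : ℝ≥0} {r : ℝ}

/-- The functions `f` and `g` are equal and constant on the ball of radius `r` around `v`. -/
def AgreeConst (r : ℝ) (f g : V → R) (v : V) : Prop :=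
  ∃ c, ∀ u ∈ closedBall v r, f u = c ∧ g u = c

theorem AgreeConst.left {f g : V → R} {v : V} (h : AgreeConst r f g v) : AgreeConst r f f v :=
  h.imp fun _ hc u hu => ⟨(hc u hu).1, (hc u hu).1⟩

theorem AgreeConst.right {f g : V → R} {v : V} (h : AgreeConst r f g v) : AgreeConst r g g v :=
  h.imp fun _ hc u hu => ⟨(hc u hu).2, (hc u hu).2⟩

variable [CommRing R]

theorem propagationLE_fn (f : V → R) : PropagationLE κ (fn f : FormOp R ι V) := fun φ v h => by
  simp [h v (mem_closedBall_self κ.2)]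

theorem AgreeConst.sub_eq_zero {f g : V → R} {v u : V} (h : AgreeConst r f g v)
    (hu : u ∈ closedBall v r) : (f - g) u = 0 := by
  obtain ⟨c, hc⟩ := h
  rw [Pi.sub_apply, (hc u hu).1, (hc u hu).2, sub_self]

variable [Fintype ι] [DecidableEq ι] [AddCommGroup V] {e : ι → V}

theorem propagationLE_dfn (he : ∀ v i, dist (v + e i) v ≤ κ) (f : V → R) :
    PropagationLE κ (dfn e f) := fun φ v h => by
  rw [dfn_apply]
  exact Finset.sum_eq_zero fun i _ => by rw [h _ (he v i), mul_zero, smul_zero]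

theorem AgreeConst.vanishesAt_dfn {f : V → R} {v u : V} (h : AgreeConst r f f v)
    (he : ∀ v i, dist (v + e i) v ≤ κ) (hu : dist u v + κ ≤ r) : VanishesAt (dfn e f) u := by
  obtain ⟨c, hc⟩ := h
  intro φ
  rw [dfn_apply]
  refine Finset.sum_eq_zero fun i _ => ?_
  have hmem : u + e i ∈ closedBall v r := by
    rw [mem_closedBall]
    linarith [dist_triangle (u + e i) u v, he u i]
  rw [(hc _ hmem).1, (hc u (by rw [mem_closedBall]; linarith [κ.2])).1, sub_self, zero_smul]

theorem prod_dfn_mul_fn_mul_prod_dfn_eq_zero (he : ∀ v i, dist (v + e i) v ≤ κ)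
    {l₁ l₂ : List (V → R)} {g : V → R} (hr : (l₁.length + l₂.length + 2) * κ ≤ r)
    (h : ∀ v, (∃ f ∈ l₁ ++ l₂, AgreeConst r f f v) ∨ ∀ u ∈ closedBall v r, g u = 0) :
    (l₁.map (dfn e)).prod * fn g * (l₂.map (dfn e)).prod = 0 := by
  set l := l₁.map (dfn e) ++ fn g :: l₂.map (dfn e) with hl
  have hprop : ∀ x ∈ l, PropagationLE κ x := by
    simp only [hl, List.forall_mem_append, List.forall_mem_cons, List.forall_mem_map]
    exact ⟨fun f _ => propagationLE_dfn he f, propagationLE_fn g, fun f _ => propagationLE_dfn he f⟩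
  have hlen : l.length * κ + κ ≤ r := by
    refine le_trans (le_of_eq ?_) hr
    simp only [hl, List.length_append, List.length_cons, List.length_map]
    push_cast
    ring
  have hvanish : ∀ v, VanishesAt l.prod v := fun v => vanishesAt_list_prod hprop <| by
    rcases h v with ⟨f, hf, hfv⟩ | hg
    · refine ⟨dfn e f, ?_, fun u hu => hfv.vanishesAt_dfn he ?_⟩
      · rcases List.mem_append.1 hf with hf | hf <;> simp [hl, List.mem_map_of_mem hf]
      · linarith [mem_closedBall.1 hu]
    · refine ⟨fn g, by simp [hl], fun u hu φ => ?_⟩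
      rw [fn_apply, hg u (closedBall_subset_closedBall (by linarith [κ.2]) hu), zero_smul]
  have hprod : (l₁.map (dfn e)).prod * fn g * (l₂.map (dfn e)).prod = l.prod := by
    rw [hl, List.prod_append, List.prod_cons, mul_assoc]
  rw [hprod]
  ext φ v
  exact hvanish v φ

theorem cochain_mem_cocycles (he : ∀ v i, dist (v + e i) v ≤ κ) {l : List (V → R)} {χ : V → R}
    (hl : Even l.length) (hr : (l.length + 3) * κ ≤ r)
    (h : ∀ v, ∃ f ∈ l ++ [χ], AgreeConst r f f v) : cochain e l χ ∈ cocycles R e := by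
  have hw := semiconjBy_prod_dfn_wedge (e := e) l
  have hΘ := semiconjBy_prod_dfn_thetaSum (e := e) l
  rw [hl.neg_one_pow, one_smul] at hw hΘ
  have hzero : (l.map (dfn e)).prod * dfn e χ = 0 := by
    have := prod_dfn_mul_fn_mul_prod_dfn_eq_zero (g := 1) (l₁ := l) (l₂ := [χ]) he
      (by rw [List.length_singleton, Nat.cast_one]; linarith) fun v => Or.inl (h v)
    simpa using this
  refine mem_evenCocycles.2 ⟨(SemiconjBy.mul_left hw (commute_fn_wedge χ)).symm, ?_⟩
  rw [dfn, mul_sub, sub_eq_zero] at hzero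
  rw [Commute, SemiconjBy, cochain, mul_assoc _ (fn χ), ← hzero, ← mul_assoc, ← mul_assoc, hΘ.eq]

theorem cochain_sub_cochain_mem_coboundaries_of_single (he : ∀ v i, dist (v + e i) v ≤ κ)
    {l₁ l₂ : List (V → R)} {f g χ : V → R} (hl : Even (l₁.length + l₂.length + 1))
    (hr : (l₁.length + l₂.length + 3) * κ ≤ r)
    (h : ∀ v, (∃ q ∈ l₁ ++ (l₂ ++ [χ]), AgreeConst r q q v) ∨ AgreeConst r f g v) :
    cochain e (l₁ ++ f :: l₂) χ - cochain e (l₁ ++ g :: l₂) χ ∈ coboundaries R e := by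
  set x := (l₁.map (dfn e)).prod with hx
  set y := (l₂.map (dfn e)).prod with hy
  have hdiff : cochain e (l₁ ++ f :: l₂) χ - cochain e (l₁ ++ g :: l₂) χ =
      x * dfn e (f - g) * y * fn χ := by
    simp only [cochain, List.map_append, List.map_cons, List.prod_append, List.prod_cons, dfn_sub,
      ← hx, ← hy]
    simp only [mul_sub, sub_mul, mul_assoc]
  have hzero : x * fn (f - g) * y * dfn e χ = 0 := by
    have := prod_dfn_mul_fn_mul_prod_dfn_eq_zero (l₁ := l₁) (l₂ := l₂ ++ [χ]) he
      (by rw [List.length_append, List.length_singleton]; push_cast; linarith) fun v =>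
      (h v).imp id fun hfg u hu => hfg.sub_eq_zero hu
    simpa only [List.map_append, List.map_singleton, List.prod_append, List.prod_singleton, ← hx,
      ← hy, ← mul_assoc] using this
  have hsign : (-1 : ℤˣ) ^ l₂.length = -(-1) ^ l₁.length := by
    have hprod := hl.neg_one_pow (α := ℤˣ)
    rw [pow_succ, pow_add, mul_neg_one, neg_eq_iff_eq_neg] at hprod
    rw [eq_inv_mul_of_mul_eq hprod, Int.units_inv_eq_self, mul_neg_one]
  have hyw := semiconjBy_prod_dfn_wedge (e := e) l₂
  have hyΘ := semiconjBy_prod_dfn_thetaSum (e := e) l₂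
  rw [hsign] at hyw hyΘ
  rw [hdiff]
  exact mul_bracket_mul_mem_evenCoboundaries (semiconjBy_prod_dfn_wedge l₁) hyw
    (commute_fn_wedge _) (commute_fn_wedge _) (semiconjBy_prod_dfn_thetaSum l₁) hyΘ hzero

end FormOp

theorem sub_mem_of_forall_split {α A : Type*} [AddGroup A] {S : AddSubgroup A} (F : List α → A)
    (ps : List (α × α)) (h : ∀ qs p rs, ps = qs ++ p :: rs →
      F (qs.map Prod.snd ++ p.1 :: rs.map Prod.fst) -
        F (qs.map Prod.snd ++ p.2 :: rs.map Prod.fst) ∈ S) :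
    F (ps.map Prod.fst) - F (ps.map Prod.snd) ∈ S := by
  induction ps generalizing F with
  | nil => simp
  | cons p ps ih =>
    have hhead := h [] p ps rfl
    have htail := ih (fun l => F (p.2 :: l)) fun qs q rs hps => h (p :: qs) q rs (by simp [hps])
    simpa using add_mem hhead htail

namespace FormOp

open Metric

variable {R ι V : Type*} [CommRing R] [Fintype ι] [DecidableEq ι] [AddCommGroup V]
  [PseudoMetricSpace V] {e : ι → V} {κ : ℝ≥0} {r : ℝ}

theorem cochain_sub_cochain_mem_coboundaries (he : ∀ v i, dist (v + e i) v ≤ κ)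
    {ps : List ((V → R) × (V → R))} {χ χ' : V → R} (hl : Even ps.length)
    (hr : (ps.length + 2) * κ ≤ r) (h : ∀ v, ∃ p ∈ ps ++ [(χ, χ')], AgreeConst r p.1 p.2 v) :
    cochain e (ps.map Prod.fst) χ - cochain e (ps.map Prod.snd) χ' ∈ coboundaries R e := by
  have hfunctions : cochain e (ps.map Prod.fst) χ - cochain e (ps.map Prod.snd) χ ∈
      coboundaries R e := by
    refine sub_mem_of_forall_split (fun l => cochain e l χ) ps ?_
    rintro qs q rs rfl
    refine cochain_sub_cochain_mem_coboundaries_of_single he (r := r) ?_ ?_ fun v => ?_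
    · simpa [add_assoc] using hl
    · refine le_trans (le_of_eq ?_) hr
      simp only [List.length_map, List.length_append, List.length_cons]
      push_cast
      ring
    · obtain ⟨p, hp, hpv⟩ := h v
      simp only [List.mem_append, List.mem_cons, List.not_mem_nil, or_false] at hp
      rcases hp with (hp | rfl | hp) | rfl
      · exact Or.inl ⟨p.2, List.mem_append_left _ (List.mem_map_of_mem hp), hpv.right⟩
      · exact Or.inr hpv
      · exact Or.inl ⟨p.1, by simp [List.mem_map_of_mem hp], hpv.left⟩
      · exact Or.inl ⟨χ, by simp, hpv.left⟩
  have hcutoff : cochain e (ps.map Prod.snd) χ = cochain e (ps.map Prod.snd) χ' := by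
    have := prod_dfn_mul_fn_mul_prod_dfn_eq_zero (l₁ := ps.map Prod.snd) (l₂ := [])
      (g := χ - χ') (r := r) he (by simpa using hr) fun v => ?_
    · simpa [cochain, mul_sub, sub_eq_zero] using this
    · obtain ⟨p, hp, hpv⟩ := h v
      rcases List.mem_append.1 hp with hp | hp
      · exact Or.inl ⟨p.2, by rw [List.append_nil]; exact List.mem_map_of_mem hp, hpv.right⟩
      · obtain rfl := List.mem_singleton.1 hp
        exact Or.inr fun u hu => hpv.sub_eq_zero hu
  rwa [← hcutoff]

end FormOp

/-! ### Volume forms of spheres -/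

namespace FormOp

section SignCochain

open Metric

variable {R ι V : Type*} [CommRing R] {d : ℕ}

variable (R) in
/-- The indicator function of the nonnegative reals. -/
noncomputable def nonnegInd (x : ℝ) : R := if 0 ≤ x then 1 else 0

theorem nonnegInd_mul {a : ℝ} (ha : 0 < a) (x : ℝ) : nonnegInd R (a * x) = nonnegInd R x := by
  simp [nonnegInd, mul_nonneg_iff_of_pos_left ha]

theorem eventually_nonnegInd_eq {x : ℝ} (hx : x ≠ 0) :
    ∀ᶠ y in 𝓝 x, nonnegInd R y = nonnegInd R x := by
  rcases hx.lt_or_gt with hx | hx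
  · filter_upwards [eventually_lt_nhds hx] with y hy
    rw [nonnegInd, nonnegInd, if_neg hy.not_ge, if_neg hx.not_ge]
  · filter_upwards [eventually_gt_nhds hx] with y hy
    rw [nonnegInd, nonnegInd, if_pos hy.le, if_pos hx.le]

variable [Fintype ι] [DecidableEq ι] [AddCommGroup V]

variable (R) in
/-- The pullback of a discrete volume form of the `d`-sphere along `F : V → ℝ^(d+1) ∖ 0`. It is
supported where `F` is close to the positive half of the last coordinate axis. -/
noncomputable def signCochain (e : ι → V) (F : V → Fin (d + 1) → ℝ) : FormOp R ι V :=
  cochain e (List.ofFn fun k : Fin d => fun v => nonnegInd R (F v k.castSucc))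
    fun v => nonnegInd R (F v (Fin.last d))

variable {e : ι → V}

theorem signCochain_smul (F : V → Fin (d + 1) → ℝ) {a : V → ℝ} (ha : ∀ v, 0 < a v) :
    signCochain R e (fun v => a v • F v) = signCochain R e F := by
  simp only [signCochain, Pi.smul_apply, smul_eq_mul, nonnegInd_mul (ha _)]

variable [PseudoMetricSpace V] {κ : ℝ≥0}

theorem prod_dfn_apply_congr (he : ∀ v i, dist (v + e i) v ≤ κ) {ps : List ((V → R) × (V → R))}
    {φ φ' : V → ExteriorAlgebra R (ι → R)} {v : V}
    (h : ∀ u ∈ closedBall v (ps.length * κ), (∀ p ∈ ps, p.1 u = p.2 u) ∧ φ u = φ' u) :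
    ((ps.map Prod.fst).map (dfn e)).prod φ v = ((ps.map Prod.snd).map (dfn e)).prod φ' v := by
  induction ps generalizing v with
  | nil => exact (h v (by simp)).2
  | cons p ps ih =>
    rw [List.length_cons] at h
    push_cast at h
    simp only [List.map_cons, List.prod_cons, Module.End.mul_apply, dfn_apply]
    refine Finset.sum_congr rfl fun i _ => ?_
    have hmem : ∀ u ∈ closedBall (v + e i) (ps.length * κ),
        u ∈ closedBall v ((ps.length + 1) * κ) := fun u hu =>
      closedBall_subset_closedBall' (by linarith [he v i]) hu
    have hv : p.1 v = p.2 v := (h v (mem_closedBall_self (by positivity))).1 p (by simp)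
    have hvi : p.1 (v + e i) = p.2 (v + e i) :=
      (h _ (hmem _ (mem_closedBall_self (by positivity)))).1 p (by simp)
    rw [hv, hvi, ih fun u hu => ⟨fun q hq => (h u (hmem u hu)).1 q (by simp [hq]),
      (h u (hmem u hu)).2⟩]

theorem signCochain_apply_congr (he : ∀ v i, dist (v + e i) v ≤ κ) {F F' : V → Fin (d + 1) → ℝ}
    {φ φ' : V → ExteriorAlgebra R (ι → R)} {v : V}
    (h : ∀ u ∈ closedBall v (d * κ), F u = F' u ∧ φ u = φ' u) :
    signCochain R e F φ v = signCochain R e F' φ' v := by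
  have hcongr := prod_dfn_apply_congr (R := R) (v := v) he
    (ps := List.ofFn fun k : Fin d => (fun v => nonnegInd R (F v k.castSucc),
      fun v => nonnegInd R (F' v k.castSucc)))
    (φ := fn (fun v => nonnegInd R (F v (Fin.last d))) φ)
    (φ' := fn (fun v => nonnegInd R (F' v (Fin.last d))) φ') fun u hu => ?_
  · rwa [List.map_ofFn (g := Prod.fst), List.map_ofFn (g := Prod.snd)] at hcongr
  · rw [List.length_ofFn] at hu
    obtain ⟨hF, hφ⟩ := h u hu
    exact ⟨List.forall_mem_ofFn_iff.2 fun k => congrArg (fun w => nonnegInd R (w k.castSucc)) hF,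
      by rw [fn_apply, fn_apply, hF, hφ]⟩

theorem propagationLE_signCochain_sub (he : ∀ v i, dist (v + e i) v ≤ κ)
    (F F' : V → Fin (d + 1) → ℝ) :
    PropagationLE (d * κ) (signCochain R e F - signCochain R e F') := fun φ v h => by
  have hzero : ∀ F : V → Fin (d + 1) → ℝ, signCochain R e F φ v = 0 := fun F => by
    rw [signCochain_apply_congr he (φ' := 0) fun u hu => ⟨rfl, h u (by simpa using hu)⟩, map_zero]
    rfl
  rw [LinearMap.sub_apply, Pi.sub_apply, hzero, hzero, sub_zero]

theorem signCochain_mem_cocycles (he : ∀ v i, dist (v + e i) v ≤ κ) (hd : Even d)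
    {F : V → Fin (d + 1) → ℝ} (h : ∀ v, ∃ k, AgreeConst ((d + 3) * κ)
      (fun u => nonnegInd R (F u k)) (fun u => nonnegInd R (F u k)) v) :
    signCochain R e F ∈ cocycles R e := by
  refine cochain_mem_cocycles he (r := (d + 3) * κ) (by simpa using hd) (by simp) fun v => ?_
  obtain ⟨k, hk⟩ := h v
  refine ⟨_, ?_, hk⟩
  cases k using Fin.lastCases with
  | last => simp
  | cast k => exact List.mem_append_left _ (List.mem_ofFn.2 ⟨k, rfl⟩)

theorem signCochain_sub_mem_coboundaries (he : ∀ v i, dist (v + e i) v ≤ κ) (hd : Even d)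
    {F F' : V → Fin (d + 1) → ℝ} (h : ∀ v, ∃ k, AgreeConst ((d + 2) * κ)
      (fun u => nonnegInd R (F u k)) (fun u => nonnegInd R (F' u k)) v) :
    signCochain R e F - signCochain R e F' ∈ coboundaries R e := by
  have hsub := cochain_sub_cochain_mem_coboundaries he (r := (d + 2) * κ)
    (χ := fun u => nonnegInd R (F u (Fin.last d))) (χ' := fun u => nonnegInd R (F' u (Fin.last d)))
    (ps := List.ofFn fun k : Fin d => (fun u => nonnegInd R (F u k.castSucc),
      fun u => nonnegInd R (F' u k.castSucc))) (by simpa using hd) (by simp) fun v => ?_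
  · rwa [List.map_ofFn, List.map_ofFn] at hsub
  · obtain ⟨k, hk⟩ := h v
    cases k using Fin.lastCases with
    | last => exact ⟨_, List.mem_append_right _ (List.mem_singleton.2 rfl), hk⟩
    | cast k => exact ⟨_, List.mem_append_left _ (List.mem_ofFn.2 ⟨k, rfl⟩), hk⟩

end SignCochain

end FormOp

/-! ### Homotopy invariance -/

section Homotopy

variable {Z P : Type*} [TopologicalSpace Z] [TopologicalSpace P]

theorem exists_homotopic_eqOn [CompactSpace Z] [R1Space Z] {U A : Set Z} (hU : IsOpen U)
    (hA : IsClosed A) (hAU : A ⊆ U) {ξ₀ ξ₁ : C(Z, P)}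
    (h : (ξ₀.restrict U).Homotopic (ξ₁.restrict U)) :
    ∃ ξ : C(Z, P), ξ₀.Homotopic ξ ∧ Set.EqOn ξ ξ₁ A := by
  classical
  obtain ⟨H⟩ := h
  obtain ⟨χ, hχU, hχA, hχI⟩ := exists_tsupport_one_of_isOpen_isClosed hU
    isClosed_closure.isCompact hA hAU
  let c (p : I × Z) : I := p.1 * ⟨χ p.2, hχI p.2⟩
  have hc : Continuous c :=
    continuous_fst.mul ((χ.continuous.comp continuous_snd).subtype_mk fun p => hχI p.2)
  let G (p : I × Z) : P := if hp : p.2 ∈ U then H (c p, ⟨p.2, hp⟩) else ξ₀ p.2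
  have hGU : ∀ p (hp : p.2 ∈ U), G p = H (c p, ⟨p.2, hp⟩) := fun p hp => dif_pos hp
  have hG₀ : ∀ p, c p = 0 → G p = ξ₀ p.2 := fun p hp => by
    by_cases hpU : p.2 ∈ U
    · rw [hGU p hpU, hp, H.apply_zero, ContinuousMap.restrict_apply]
    · exact dif_neg hpU
  have hG : Continuous G := continuous_iff_continuousAt.2 fun ⟨t, z⟩ => by
    by_cases hz : z ∈ U
    · have hemb := Topology.IsOpenEmbedding.id (X := I).prodMap hU.isOpenEmbedding_subtypeVal
      refine (hemb.continuousAt_iff (x := (t, ⟨z, hz⟩))).1 (Continuous.continuousAt ?_)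
      have hcomp : G ∘ Prod.map id Subtype.val = fun p : I × U => H (c (p.1, p.2), p.2) :=
        funext fun p => hGU _ p.2.2
      rw [hcomp]
      fun_prop
    · refine (ξ₀.continuous.comp continuous_snd).continuousAt.congr ?_
      have hN : Prod.snd ⁻¹' (tsupport χ)ᶜ ∈ 𝓝 (t, z) :=
        ((isClosed_tsupport χ).isOpen_compl.preimage continuous_snd).mem_nhds fun h => hz (hχU h)
      filter_upwards [hN] with p hp
      refine (hG₀ p (Subtype.ext ?_)).symm
      simp [c, image_eq_zero_of_notMem_tsupport hp]
  refine ⟨⟨fun z => G (1, z), by fun_prop⟩, ⟨⟨⟨G, hG⟩, fun z => ?_, fun _ => rfl⟩⟩, fun z hz => ?_⟩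
  · exact hG₀ _ (zero_mul _)
  · have hcz : c (1, z) = 1 := Subtype.ext (by simp [c, hχA hz])
    exact (hGU _ (hAU hz)).trans (by rw [hcz, H.apply_one, ContinuousMap.restrict_apply])

end Homotopy

theorem eventually_nnreal_mul_lt (c : ℝ) {δ : ℝ} (hδ : 0 < δ) :
    ∀ᶠ κ : ℝ≥0 in 𝓝 0, c * κ < δ := by
  have h : Continuous fun κ : ℝ≥0 => c * (κ : ℝ) := by fun_prop
  exact (h.tendsto' 0 0 (by simp)).eventually_lt_const hδ

/-- The complement of the origin in `ℝ^d`. -/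
abbrev PuncturedSpace (d : ℕ) := {x : Fin d → ℝ // x ≠ 0}

namespace FormOp

open Metric

variable {R : Type*} [CommRing R] {Z : Type*} [PseudoMetricSpace Z] [CompactSpace Z] {d : ℕ}

variable (R) in
theorem exists_ball_nonnegInd_eq (F : C(Z, PuncturedSpace d)) :
    ∃ δ > 0, ∀ z, ∃ k c, ∀ w ∈ ball z δ, nonnegInd R ((F w).1 k) = c := by
  choose k hk using fun z => Function.ne_iff.1 (F z).2
  obtain ⟨V, hV, h⟩ := lebesgue_number_lemma_nhds (K := (Set.univ : Set Z)) isCompact_univ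
    (U := fun z => {w | nonnegInd R ((F w).1 (k z)) = nonnegInd R ((F z).1 (k z))}) fun z _ =>
      ((continuous_apply (k z)).comp
        (continuous_subtype_val.comp F.continuous)).continuousAt.eventually
        (eventually_nonnegInd_eq (hk z))
  obtain ⟨δ, hδ, hδV⟩ := Metric.mem_uniformity_dist.1 hV
  refine ⟨δ, hδ, fun z => ?_⟩
  obtain ⟨y, hy⟩ := h z trivial
  exact ⟨k y, _, fun w hw => hy (hδV (by rwa [dist_comm]))⟩

variable {ι : Type*} [Fintype ι] [DecidableEq ι]

theorem eventually_signCochain_mem_cocycles (hd : Even d) (F : C(Z, PuncturedSpace (d + 1))) :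
    ∀ᶠ κ : ℝ≥0 in 𝓝 0, ∀ (V : Type) [AddCommGroup V] [PseudoMetricSpace V] (e : ι → V)
      (y : V → Z), LipschitzWith 1 y → (∀ v i, dist (v + e i) v ≤ κ) →
      signCochain R e (fun v => (F (y v)).1) ∈ cocycles R e := by
  obtain ⟨δ, hδ, h⟩ := exists_ball_nonnegInd_eq R F
  filter_upwards [eventually_nnreal_mul_lt (d + 3) hδ] with κ hκ V _ _ e y hy he
  refine signCochain_mem_cocycles he hd fun v => ?_
  obtain ⟨k, c, hc⟩ := h (y v)
  have hmem : ∀ u ∈ closedBall v ((d + 3) * κ), y u ∈ ball (y v) δ := fun u hu =>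
    (hy.dist_le_mul u v).trans_lt (by simpa using (mem_closedBall.1 hu).trans_lt hκ)
  exact ⟨k, c, fun u hu => ⟨hc _ (hmem u hu), hc _ (hmem u hu)⟩⟩

theorem eventually_signCochain_sub_mem_coboundaries (hd : Even d)
    {F₀ F₁ : C(Z, PuncturedSpace (d + 1))} (hF : F₀.Homotopic F₁) :
    ∀ᶠ κ : ℝ≥0 in 𝓝 0, ∀ (V : Type) [AddCommGroup V] [PseudoMetricSpace V] (e : ι → V)
      (y : V → Z), LipschitzWith 1 y → (∀ v i, dist (v + e i) v ≤ κ) →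
      signCochain R e (fun v => (F₁ (y v)).1) - signCochain R e (fun v => (F₀ (y v)).1) ∈
        coboundaries R e := by
  obtain ⟨H⟩ := hF
  obtain ⟨δ, hδ, h⟩ := exists_ball_nonnegInd_eq R H.toContinuousMap
  filter_upwards [eventually_nnreal_mul_lt (d + 2) hδ] with κ hκ V _ _ e y hy he
  have hconst : IsLocallyConstant fun t : I =>
      (signCochain R e fun v => (H (t, y v)).1 : FormOp R ι V ⧸ coboundaries R e) := by
    refine (IsLocallyConstant.iff_eventually_eq _).2 fun t => ?_
    filter_upwards [ball_mem_nhds t hδ] with s hs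
    refine QuotientAddGroup.eq_iff_sub_mem.2 (signCochain_sub_mem_coboundaries he hd fun v => ?_)
    obtain ⟨k, c, hc⟩ := h (t, y v)
    have hmem : ∀ s ∈ ball t δ, ∀ u ∈ closedBall v ((d + 2) * κ), (s, y u) ∈ ball (t, y v) δ :=
      fun s hs u hu => max_lt hs <|
        (hy.dist_le_mul u v).trans_lt (by simpa using (mem_closedBall.1 hu).trans_lt hκ)
    exact ⟨k, c, fun u hu => ⟨hc _ (hmem s hs u hu), hc _ (hmem t (mem_ball_self hδ) u hu)⟩⟩
  simpa using QuotientAddGroup.eq_iff_sub_mem.1 (hconst.apply_eq_of_preconnectedSpace 1 0)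

theorem eventually_prod_signCochain_sub_eq_zero {n : ℕ} {W : Fin n → Set Z}
    (hW : ∀ i, IsOpen (W i)) (hcover : ⋃ i, W i = Set.univ)
    {F G : Fin n → C(Z, PuncturedSpace (d + 1))} (hFG : ∀ i, Set.EqOn (F i) (G i) (W i)) :
    ∀ᶠ κ : ℝ≥0 in 𝓝 0, ∀ (V : Type) [AddCommGroup V] [PseudoMetricSpace V] (e : ι → V)
      (y : V → Z), LipschitzWith 1 y → (∀ v i, dist (v + e i) v ≤ κ) →
      (List.ofFn fun i => signCochain R e (fun v => (F i (y v)).1) -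
        signCochain R e (fun v => (G i (y v)).1)).prod = 0 := by
  obtain ⟨δ, hδ, hball⟩ := lebesgue_number_lemma_of_metric isCompact_univ hW hcover.ge
  filter_upwards [eventually_nnreal_mul_lt (n * d + d) hδ] with κ hκ V _ _ e y hy he
  ext φ v
  refine vanishesAt_list_prod (κ := d * κ) (List.forall_mem_ofFn_iff.2 fun i =>
    propagationLE_signCochain_sub he _ _) ?_ φ
  obtain ⟨i, hi⟩ := hball (y v) trivial
  refine ⟨_, List.mem_ofFn.2 ⟨i, rfl⟩, fun u hu φ => ?_⟩
  rw [LinearMap.sub_apply, Pi.sub_apply, sub_eq_zero]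
  refine signCochain_apply_congr he fun w hw => ⟨congrArg _ (hFG i (hi ?_)), rfl⟩
  have hwv : dist w v < δ := by
    rw [mem_closedBall] at hu hw
    rw [List.length_ofFn] at hu
    push_cast at hu
    linarith [dist_triangle w u v]
  exact (hy.dist_le_mul w v).trans_lt (by simpa using hwv)

theorem eventually_prod_signCochain_sub_mem_coboundaries (hd : Even d) {n : ℕ}
    {U : Fin n → Set Z} (hU : ∀ i, IsOpen (U i)) (hcover : ⋃ i, U i = Set.univ)
    {ξ₀ ξ₁ : Fin n → C(Z, PuncturedSpace (d + 1))}
    (hξ : ∀ i, ((ξ₀ i).restrict (U i)).Homotopic ((ξ₁ i).restrict (U i))) :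
    ∀ᶠ κ : ℝ≥0 in 𝓝 0, ∀ (V : Type) [AddCommGroup V] [PseudoMetricSpace V] (e : ι → V)
      (y : V → Z), LipschitzWith 1 y → (∀ v i, dist (v + e i) v ≤ κ) →
      (List.ofFn fun i => signCochain R e (fun v => (ξ₁ i (y v)).1) -
        signCochain R e (fun v => (ξ₀ i (y v)).1)).prod ∈ coboundaries R e := by
  obtain ⟨W, hWcover, hW, hWU⟩ := exists_iUnion_eq_closure_subset hU
    (fun _ => Set.toFinite _) hcover
  choose ξ hξ₀ hξ₁ using fun i => exists_homotopic_eqOn (hU i) isClosed_closure (hWU i) (hξ i)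
  filter_upwards [
    eventually_prod_signCochain_sub_eq_zero (R := R) (ι := ι) hW hWcover
      fun i z hz => ((hξ₁ i) (subset_closure hz)).symm,
    Filter.eventually_all.2 fun i =>
      eventually_signCochain_mem_cocycles (R := R) (ι := ι) hd (ξ₀ i),
    Filter.eventually_all.2 fun i =>
      eventually_signCochain_mem_cocycles (R := R) (ι := ι) hd (ξ₁ i),
    Filter.eventually_all.2 fun i =>
      eventually_signCochain_mem_cocycles (R := R) (ι := ι) hd (ξ i),
    Filter.eventually_all.2 fun i =>
      eventually_signCochain_sub_mem_coboundaries (R := R) (ι := ι) hd (hξ₀ i)]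
    with κ hzero hcl₀ hcl₁ hcl hhom V _ _ e y hy he
  have hprod := list_prod_sub_mem_evenCoboundaries (l := List.finRange n)
    (f := fun i => signCochain R e (fun v => (ξ₁ i (y v)).1) -
      signCochain R e (fun v => (ξ₀ i (y v)).1))
    (g := fun i => signCochain R e (fun v => (ξ₁ i (y v)).1) -
      signCochain R e (fun v => (ξ i (y v)).1))
    (fun i _ => sub_mem (hcl₁ i V e y hy he) (hcl₀ i V e y hy he))
    (fun i _ => sub_mem (hcl₁ i V e y hy he) (hcl i V e y hy he))
    (fun i _ => by simpa using hhom i V e y hy he)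
  rwa [← List.ofFn_eq_map, ← List.ofFn_eq_map, hzero V e y hy he, sub_zero] at hprod

end FormOp

theorem HasTCCover.eventually_prod_mem_coboundaries {R : Type*} [CommRing R] {ι : Type*}
    [Fintype ι] [DecidableEq ι] {Z X : Type*} [PseudoMetricSpace Z] [CompactSpace Z]
    [TopologicalSpace X] {d : ℕ} (hd : Even d) {l : List C(X, PuncturedSpace (d + 1))}
    (h : HasTCCover X l.length) (q : C(Z, X × X)) :
    ∀ᶠ κ : ℝ≥0 in 𝓝 0, ∀ (V : Type) [AddCommGroup V] [PseudoMetricSpace V] (e : ι → V)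
      (y : V → Z), LipschitzWith 1 y → (∀ v i, dist (v + e i) v ≤ κ) →
      (l.map fun f => FormOp.signCochain R e (fun v => (f (q (y v)).2).1) -
        FormOp.signCochain R e (fun v => (f (q (y v)).1).1)).prod ∈ FormOp.coboundaries R e := by
  obtain ⟨U, hU, hcover, hs⟩ := h
  have hhom : ∀ i : Fin l.length,
      ((l[i].comp (ContinuousMap.fst.comp q)).restrict (q ⁻¹' U i)).Homotopic
      ((l[i].comp (ContinuousMap.snd.comp q)).restrict (q ⁻¹' U i)) := fun i =>
    ((ContinuousMap.Homotopic.refl l[i]).comp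
      (hasMotionPlanningSection_iff_homotopic.1 (hs i))).comp
      (ContinuousMap.Homotopic.refl (q.restrictPreimage (U i)))
  have hpre : ⋃ i, q ⁻¹' U i = Set.univ := by
    rw [← Set.preimage_iUnion, hcover, Set.preimage_univ]
  filter_upwards [FormOp.eventually_prod_signCochain_sub_mem_coboundaries (R := R) (ι := ι) hd
    (fun i => (hU i).preimage q.continuous) hpre hhom] with κ hκ V _ _ e y hy he
  rw [← List.ofFn_getElem_eq_map]
  exact hκ V e y hy he

/-! ### Monomials -/

namespace FormOp

variable {R ι V : Type*} [CommRing R] [DecidableEq ι]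

theorem exists_linearMap_list_prod_covec_eq_one {s : List ι} (hs : s.Nodup) :
    ∃ ψ : ExteriorAlgebra R (ι → R) →ₗ[R] R, ψ (s.map (covec R)).prod = 1 := by
  let minor : (ι → R) [⋀^Fin s.length]→ₗ[R] R :=
    Matrix.detRowAlternating.compLinearMap (LinearMap.funLeft R R s.get)
  refine ⟨ExteriorAlgebra.liftAlternating (Pi.single s.length minor), ?_⟩
  have hprod : (s.map (covec R)).prod =
      ExteriorAlgebra.ιMulti R s.length fun i => (Pi.single (s.get i) 1 : ι → R) := by
    rw [ExteriorAlgebra.ιMulti_apply]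
    conv_lhs => rw [← List.ofFn_get s, List.map_ofFn]
    rfl
  have hone : (Matrix.of fun i => LinearMap.funLeft R R s.get (Pi.single (s.get i) 1)) = 1 := by
    ext i j
    simp only [Matrix.of_apply, LinearMap.funLeft_apply, Pi.single_apply, Matrix.one_apply,
      hs.injective_get.eq_iff, eq_comm]
  rw [hprod, ExteriorAlgebra.liftAlternating_apply_ιMulti, Pi.single_eq_same]
  exact (congrArg Matrix.det hone).trans Matrix.det_one

variable [AddCommGroup V]

variable (R) in
/-- The monomial form of a list of directions. -/
noncomputable def thetaProd (e : ι → V) (s : List ι) : FormOp R ι V := (s.map (theta R e)).prod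

variable {e : ι → V}

theorem thetaProd_cons (i : ι) (s : List ι) :
    thetaProd R e (i :: s) = theta R e i * thetaProd R e s := by
  simp [thetaProd]

theorem thetaProd_append (s t : List ι) :
    thetaProd R e (s ++ t) = thetaProd R e s * thetaProd R e t := by
  simp [thetaProd]

theorem semiconjBy_thetaProd_theta (s : List ι) (i : ι) :
    SemiconjBy (thetaProd R e s) (theta R e i) ((-1 : ℤˣ) ^ s.length • theta R e i) := by
  have h := semiconjBy_list_prod (l := s.map (theta R e)) (a := theta R e i) <|
    List.forall_mem_map.2 fun j _ =>
      (theta_mul_theta R e j i).trans (neg_mul (α := FormOp R ι V) _ _).symm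
  rwa [List.length_map] at h

theorem commute_thetaProd {s : List ι} (hs : Even s.length) (t : List ι) :
    Commute (thetaProd R e s) (thetaProd R e t) := by
  refine Commute.list_prod_right _ _ (List.forall_mem_map.2 fun i _ => ?_)
  have h := semiconjBy_thetaProd_theta (R := R) (e := e) s i
  rwa [hs.neg_one_pow, one_smul] at h

theorem thetaProd_mul_self {s : List ι} (hs : s ≠ []) : thetaProd R e s * thetaProd R e s = 0 := by
  obtain ⟨i, t, rfl⟩ := List.exists_cons_of_ne_nil hs
  rw [thetaProd_cons, mul_assoc, ← mul_assoc (thetaProd R e t),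
    (semiconjBy_thetaProd_theta t i).eq, smul_mul_assoc, smul_mul_assoc, mul_smul_comm,
    mul_assoc (theta R e i), ← mul_assoc (theta R e i), theta_mul_self, zero_mul, smul_zero]

theorem thetaProd_mul_fn (s : List ι) (f : V → R) :
    thetaProd R e s * fn f = fn (fun v => f (v + (s.map e).sum)) * thetaProd R e s := by
  induction s generalizing f with
  | nil => simp [thetaProd]
  | cons i s ih =>
    rw [thetaProd_cons, mul_assoc, ih, ← mul_assoc, theta_mul_fn, mul_assoc]
    simp [add_assoc]

theorem thetaProd_apply_one (s : List ι) (v : V) :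
    thetaProd R e s 1 v = (s.map (covec R)).prod := by
  induction s generalizing v with
  | nil => simp [thetaProd]
  | cons i s ih => rw [thetaProd_cons, Module.End.mul_apply, theta_apply, ih, List.map_cons,
      List.prod_cons]

theorem commute_thetaProd_fn {s : List ι} {f : V → R} (h : ∀ v, ∀ i ∈ s, f (v + e i) = f v) :
    Commute (thetaProd R e s) (fn f) := by
  refine Commute.list_prod_left _ _ (List.forall_mem_map.2 fun i hi => ?_)
  rw [Commute, SemiconjBy, theta_mul_fn, funext fun v => h v i hi]

theorem list_prod_fn_mul_thetaProd {J : Type*} {f : J → V → R} {s : J → List ι} {l : List J}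
    (hl : l.Nodup) (h : ∀ j j', j ≠ j' → ∀ v, ∀ i ∈ s j, f j' (v + e i) = f j' v) :
    (l.map fun j => fn (f j) * thetaProd R e (s j)).prod =
      fn (l.map f).prod * thetaProd R e (l.flatMap s) := by
  induction l with
  | nil => simp [thetaProd]
  | cons j l ih =>
    rw [List.nodup_cons] at hl
    have hcomm : Commute (thetaProd R e (s j)) (fn (l.map f).prod) := by
      rw [map_list_prod, List.map_map]
      exact Commute.list_prod_right _ _ <| List.forall_mem_map.2 fun j' hj' =>
        commute_thetaProd_fn (h j j' fun hj => hl.1 (hj ▸ hj'))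
    rw [List.map_cons, List.prod_cons, ih hl.2, hcomm.mul_mul_mul_comm, List.map_cons,
      List.prod_cons, map_mul, List.flatMap_cons, thetaProd_append]

end FormOp

/-! ### The volume form of a torus -/

section Torus

variable {d : ℕ}

/-- A map of degree one from the `d`-torus to the complement of the origin in `ℝ^(d+1)`: it meets
the positive half of the last coordinate axis exactly once, at `1`. -/
noncomputable def torusCollapse (z : Fin d → Circle) : Fin (d + 1) → ℝ :=
  Fin.snoc (fun l => (z l : ℂ).im) (∑ l, (z l : ℂ).re - (d - 1))

@[simp]
theorem torusCollapse_castSucc (z : Fin d → Circle) (l : Fin d) :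
    torusCollapse z l.castSucc = (z l : ℂ).im := by
  simp [torusCollapse]

@[simp]
theorem torusCollapse_last (z : Fin d → Circle) :
    torusCollapse z (Fin.last d) = ∑ l, (z l : ℂ).re - (d - 1) := by
  simp [torusCollapse]

theorem continuous_torusCollapse : Continuous (torusCollapse (d := d)) := by
  refine continuous_pi fun k => ?_
  cases k using Fin.lastCases with
  | last =>
    simp only [torusCollapse_last]
    fun_prop
  | cast l =>
    simp only [torusCollapse_castSucc]
    fun_prop

theorem re_nonneg_of_torusCollapse_last_nonneg {z : Fin d → Circle}
    (h : 0 ≤ torusCollapse z (Fin.last d)) (l : Fin d) : 0 ≤ (z l : ℂ).re := by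
  have hle : ∀ l, (z l : ℂ).re ≤ 1 := fun l => (Complex.re_le_norm _).trans_eq (Circle.norm_coe _)
  have hsum : ∑ l, (1 - (z l : ℂ).re) = d - ∑ l, (z l : ℂ).re := by simp
  have hl := Finset.single_le_sum (fun l _ => sub_nonneg.2 (hle l)) (Finset.mem_univ l)
  rw [torusCollapse_last] at h
  linarith

theorem torusCollapse_ne_zero (z : Fin d → Circle) : torusCollapse z ≠ 0 := by
  intro h
  have hlast : torusCollapse z (Fin.last d) = 0 := congrFun h _
  have hre : ∀ l, (z l : ℂ).re = 1 := fun l => by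
    have him : (z l : ℂ).im = 0 := by simpa using congrFun h l.castSucc
    have hsq := Circle.normSq_coe (z l)
    rw [Complex.normSq_apply, him, mul_zero, add_zero] at hsq
    nlinarith [re_nonneg_of_torusCollapse_last_nonneg hlast.ge l]
  simp [hre] at hlast

end Torus

section ToCircle

variable {L : ℕ} [NeZero L]

theorem toCircle_one : ZMod.toCircle (1 : ZMod L) = Circle.exp (2 * Real.pi / L) := by
  ext
  have h := ZMod.toCircle_natCast (N := L) 1
  rw [Nat.cast_one] at h
  rw [h, Circle.coe_exp]
  push_cast
  ring_nf

theorem toCircle_one_re_pos (hL : 4 < L) : 0 < (ZMod.toCircle (1 : ZMod L) : ℂ).re := by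
  have hL' : (4 : ℝ) < L := by exact_mod_cast hL
  rw [toCircle_one, Circle.coe_exp, Complex.exp_ofReal_mul_I_re]
  refine Real.cos_pos_of_mem_Ioo ⟨?_, ?_⟩
  · have : 0 ≤ 2 * Real.pi / L := by positivity
    linarith [Real.pi_pos]
  · rw [div_lt_iff₀ (by linarith)]
    nlinarith [Real.pi_pos]

theorem toCircle_one_im_pos (hL : 2 < L) : 0 < (ZMod.toCircle (1 : ZMod L) : ℂ).im := by
  have hL' : (2 : ℝ) < L := by exact_mod_cast hL
  rw [toCircle_one, Circle.coe_exp, Complex.exp_ofReal_mul_I_im]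
  refine Real.sin_pos_of_pos_of_lt_pi (by positivity) ?_
  rw [div_lt_iff₀ (by linarith)]
  nlinarith [Real.pi_pos]

theorem toCircle_im_eq (t : ZMod L) : (ZMod.toCircle t : ℂ).im =
    (ZMod.toCircle (t + 1) : ℂ).im * (ZMod.toCircle (1 : ZMod L) : ℂ).re -
      (ZMod.toCircle (t + 1) : ℂ).re * (ZMod.toCircle (1 : ZMod L) : ℂ).im := by
  have h := Circle.normSq_coe (ZMod.toCircle (1 : ZMod L))
  rw [Complex.normSq_apply] at h
  rw [AddChar.map_add_eq_mul, Circle.coe_mul, Complex.mul_re, Complex.mul_im]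
  linear_combination (-(ZMod.toCircle t : ℂ).im) * h

theorem toCircle_im_neg (hL : 4 < L) {t : ZMod L} (him : (ZMod.toCircle (t + 1) : ℂ).im < 0)
    (hre : 0 ≤ (ZMod.toCircle (t + 1) : ℂ).re) : (ZMod.toCircle t : ℂ).im < 0 := by
  rw [toCircle_im_eq]
  linarith [mul_neg_of_neg_of_pos him (toCircle_one_re_pos hL),
    mul_nonneg hre (toCircle_one_im_pos (by omega : 2 < L)).le]

theorem toCircle_neg_one_im_neg (hL : 2 < L) : (ZMod.toCircle (-1 : ZMod L) : ℂ).im < 0 := by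
  rw [toCircle_im_eq]
  simpa using toCircle_one_im_pos hL

theorem dist_toCircle_add_one (t : ZMod L) :
    dist (ZMod.toCircle (t + 1)) (ZMod.toCircle t) = dist (Circle.exp (2 * Real.pi / L)) 1 := by
  rw [← toCircle_one, AddChar.map_add_eq_mul]
  change dist ((ZMod.toCircle t : ℂ) * ZMod.toCircle (1 : ZMod L)) (ZMod.toCircle t) =
    dist (ZMod.toCircle (1 : ZMod L) : ℂ) 1
  rw [dist_eq_norm, dist_eq_norm, ← mul_sub_one, norm_mul, Circle.norm_coe, one_mul]

end ToCircle

namespace FormOp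

section TorusWeight

variable {d L : ℕ} [NeZero L]

/-- The coefficient of the volume form pulled back along `torusCollapse` to the discrete torus. -/
noncomputable def torusWeight (R : Type*) [CommRing R] (u : Fin d → ZMod L) : R :=
  (∏ l, (nonnegInd R (ZMod.toCircle (u l + 1) : ℂ).im - nonnegInd R (ZMod.toCircle (u l) : ℂ).im)) *
    nonnegInd R (torusCollapse (fun l => ZMod.toCircle (u l + 1)) (Fin.last d))

theorem torusWeight_neg_one {R : Type*} [CommRing R] (hL : 2 < L) :
    torusWeight R (fun _ : Fin d => (-1 : ZMod L)) = 1 := by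
  simp [torusWeight, nonnegInd, (toCircle_neg_one_im_neg hL).not_ge]

variable {R : Type*} [CommRing R] [PartialOrder R] [IsOrderedRing R]

theorem nonnegInd_toCircle_le (hL : 4 < L) {t : ZMod L}
    (h : 0 ≤ (ZMod.toCircle (t + 1) : ℂ).re) :
    nonnegInd R (ZMod.toCircle t : ℂ).im ≤ nonnegInd R (ZMod.toCircle (t + 1) : ℂ).im := by
  unfold nonnegInd
  split_ifs with h₁ h₂ h₂
  · exact le_rfl
  · exact absurd (toCircle_im_neg hL (not_le.1 h₂) h) h₁.not_gt
  · exact zero_le_one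
  · exact le_rfl

theorem torusWeight_nonneg (hL : 4 < L) (u : Fin d → ZMod L) : 0 ≤ torusWeight R u := by
  by_cases h : 0 ≤ torusCollapse (fun l => ZMod.toCircle (u l + 1)) (Fin.last d)
  · rw [torusWeight, nonnegInd, if_pos h, mul_one]
    exact Finset.prod_nonneg fun l _ =>
      sub_nonneg.2 (nonnegInd_toCircle_le hL (re_nonneg_of_torusCollapse_last_nonneg h l))
  · rw [torusWeight, nonnegInd, if_neg h, mul_zero]

end TorusWeight

section UnitStep

variable {ι : Type*} [DecidableEq ι] {L : ℕ}

/-- The unit steps of a discrete torus. -/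
def unitStep (ι : Type*) [DecidableEq ι] (L : ℕ) (i : ι) : ι → ZMod L := Pi.single i 1

theorem add_unitStep_apply_self (v : ι → ZMod L) (i : ι) : (v + unitStep ι L i) i = v i + 1 := by
  simp [unitStep]

theorem add_unitStep_apply_of_ne (v : ι → ZMod L) {i j : ι} (h : j ≠ i) :
    (v + unitStep ι L i) j = v j := by
  simp [unitStep, h]

theorem dfn_unitStep_apply {R : Type*} [CommRing R] [Fintype ι] (f : ZMod L → R) (i : ι) :
    dfn (unitStep ι L) (fun v => f (v i)) =
      fn (fun v => f (v i + 1) - f (v i)) * theta R (unitStep ι L) i := by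
  rw [dfn_eq_sum, Finset.sum_eq_single i]
  · simp only [add_unitStep_apply_self]
  · intro j _ hj
    simp only [add_unitStep_apply_of_ne _ hj.symm, sub_self]
    exact (congrArg (· * theta R (unitStep ι L) j) (map_zero fn)).trans (zero_mul _)
  · simp

theorem dist_toCircle_add_unitStep_le [Fintype ι] [NeZero L] (v : ι → ZMod L) (i : ι) :
    dist (fun j => ZMod.toCircle ((v + unitStep ι L i) j)) (fun j => ZMod.toCircle (v j)) ≤
      dist (Circle.exp (2 * Real.pi / L)) 1 := by
  refine (dist_pi_le_iff dist_nonneg).2 fun j => ?_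
  obtain rfl | hij := eq_or_ne j i
  · rw [add_unitStep_apply_self, dist_toCircle_add_one]
  · rw [add_unitStep_apply_of_ne v hij, dist_self]
    exact dist_nonneg

end UnitStep

end FormOp

namespace FormOp

section Blocks

variable {K : Type*} (d : ℕ)

/-- The directions in the `k`-th block. -/
def block (k : K) : List (K × Fin d) := (List.finRange d).map fun l => (k, l)

theorem length_block (k : K) : (block d k).length = d := by simp [block]

variable {d}

theorem fst_eq_of_mem_block {k : K} {i : K × Fin d} (hi : i ∈ block d k) : i.1 = k := by
  obtain ⟨l, -, rfl⟩ := List.mem_map.1 hi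
  rfl

theorem nodup_flatMap_block {l : List K} (hl : l.Nodup) : (l.flatMap (block d)).Nodup := by
  refine List.nodup_flatMap.2 ⟨fun k _ => (List.nodup_finRange d).map fun _ _ h =>
    (Prod.ext_iff.1 h).2, hl.imp fun hne i h h' => hne ?_⟩
  exact (fst_eq_of_mem_block h).symm.trans (fst_eq_of_mem_block h')

section UnitStep

variable [DecidableEq K] {L : ℕ}

theorem add_sum_block_apply (v : K × Fin d → ZMod L) (k : K) (l : Fin d) :
    (v + ((block d k).map (unitStep _ L)).sum) (k, l) = v (k, l) + 1 := by
  rw [Pi.add_apply, block, List.map_map, ← Fin.sum_univ_def, Finset.sum_apply]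
  simp [unitStep, Pi.single_apply]

variable [NeZero L] {R : Type*} [CommRing R]

/-- The coefficient of the volume form of the `k`-th factor of a product of discrete tori. -/
noncomputable def blockWeight (R : Type*) [CommRing R] (k : K) (v : K × Fin d → ZMod L) : R :=
  torusWeight R fun l => v (k, l)

theorem blockWeight_add_unitStep {k k' : K} (h : k ≠ k') (v : K × Fin d → ZMod L)
    {i : K × Fin d} (hi : i ∈ block d k) :
    blockWeight R k' (v + unitStep (K × Fin d) L i) = blockWeight R k' v := by
  refine congrArg (torusWeight R) (funext fun l => add_unitStep_apply_of_ne v fun hl => h ?_)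
  exact (fst_eq_of_mem_block hi).symm.trans (congrArg Prod.fst hl).symm

end UnitStep

section BlockForm

variable [Fintype K] [DecidableEq K] {L : ℕ} [NeZero L] {R : Type*} [CommRing R]

/-- The volume form of the `k`-th factor of a product of discrete `d`-tori. -/
noncomputable def blockForm (R : Type*) [CommRing R] (d L : ℕ) [NeZero L] (k : K) :
    FormOp R (K × Fin d) (K × Fin d → ZMod L) :=
  signCochain R (unitStep _ L) fun v => torusCollapse fun l : Fin d => ZMod.toCircle (v (k, l))

theorem prod_dfn_nonnegInd_im (k : K) :
    ((List.ofFn fun (l : Fin d) (v : K × Fin d → ZMod L) =>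
      nonnegInd R (ZMod.toCircle (v (k, l)) : ℂ).im).map (dfn (unitStep _ L))).prod =
      fn (fun v => ∏ l, (nonnegInd R (ZMod.toCircle (v (k, l) + 1) : ℂ).im -
        nonnegInd R (ZMod.toCircle (v (k, l)) : ℂ).im)) *
        thetaProd R (unitStep _ L) (block d k) := by
  have hprod := list_prod_fn_mul_thetaProd (e := unitStep (K × Fin d) L)
    (f := fun (l : Fin d) v => nonnegInd R (ZMod.toCircle (v (k, l) + 1) : ℂ).im -
      nonnegInd R (ZMod.toCircle (v (k, l)) : ℂ).im) (s := fun l => [(k, l)])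
    (List.nodup_finRange d) fun l l' hl v i hi => by
      rw [List.mem_singleton.1 hi, add_unitStep_apply_of_ne v (by simpa using hl.symm)]
  rw [← List.map_eq_flatMap, ← Fin.prod_univ_def] at hprod
  rw [block, ← Finset.prod_fn, ← hprod, List.map_ofFn, List.ofFn_eq_map]
  refine congrArg List.prod (List.map_congr_left fun l _ => ?_)
  rw [thetaProd, List.map_singleton, List.prod_singleton]
  exact dfn_unitStep_apply (fun t => nonnegInd R (ZMod.toCircle t : ℂ).im) (k, l)

theorem blockForm_eq (k : K) :
    blockForm R d L k = fn (blockWeight R k) * thetaProd R (unitStep _ L) (block d k) := by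
  rw [blockForm, signCochain, cochain]
  simp only [torusCollapse_castSucc]
  rw [prod_dfn_nonnegInd_im, mul_assoc, thetaProd_mul_fn, ← mul_assoc, ← map_mul]
  simp only [torusCollapse_last, add_sum_block_apply]
  congr 2
  ext v
  simp [blockWeight, torusWeight]

theorem list_prod_blockForm {l : List K} (hl : l.Nodup) :
    (l.map (blockForm R d L)).prod =
      fn (l.map (blockWeight R)).prod * thetaProd R (unitStep _ L) (l.flatMap (block d)) := by
  rw [← list_prod_fn_mul_thetaProd hl fun k k' hk v i hi => blockWeight_add_unitStep hk v hi]
  exact congrArg List.prod (List.map_congr_left fun k _ => blockForm_eq k)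

theorem blockForm_mul_self (hd : d ≠ 0) (k : K) : blockForm R d L k * blockForm R d L k = 0 := by
  have hblock : block d k ≠ [] := fun h => hd (by rw [← length_block d k, h, List.length_nil])
  rw [blockForm_eq, mul_assoc, ← mul_assoc (thetaProd _ _ _), thetaProd_mul_fn, mul_assoc,
    thetaProd_mul_self hblock, mul_zero, mul_zero]

theorem commute_blockForm (hd : Even d) {k k' : K} (h : k ≠ k') :
    Commute (blockForm R d L k) (blockForm R d L k') := by
  have hfn : ∀ {k k' : K}, k ≠ k' →
      Commute (thetaProd R (unitStep _ L) (block d k)) (fn (blockWeight R k')) := fun h =>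
    commute_thetaProd_fn fun v _ hi => blockWeight_add_unitStep h v hi
  rw [blockForm_eq, blockForm_eq]
  exact (((Commute.all _ _).map fn).mul_right (hfn h.symm).symm).mul_left <|
    (hfn h).mul_right (commute_thetaProd (by rwa [length_block]) _)

theorem blockForm_sub_mul_self (hd : Even d) (hd0 : d ≠ 0) {k k' : K} (h : k ≠ k') :
    (blockForm R d L k' - blockForm R d L k) * (blockForm R d L k' - blockForm R d L k) =
      (-2 : ℤ) • (blockForm R d L k * blockForm R d L k') := by
  rw [sub_mul, mul_sub, mul_sub, blockForm_mul_self hd0, blockForm_mul_self hd0,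
    (commute_blockForm hd h).eq]
  module

theorem list_prod_blockForm_sub_mul_self {J : Type*} [Fintype J] [DecidableEq J] (hd : Even d)
    (hd0 : d ≠ 0) (l : List J) :
    (l.map fun j =>
      (blockForm R d L (j, (1 : Fin 2)) - blockForm R d L (j, (0 : Fin 2))) *
        (blockForm R d L (j, (1 : Fin 2)) - blockForm R d L (j, (0 : Fin 2)))).prod =
      (-2 : ℤ) ^ l.length • ((l ×ˢ [(0 : Fin 2), 1]).map (blockForm R d L)).prod := by
  have hpairs : ((l ×ˢ [(0 : Fin 2), 1]).map (blockForm R d L)).prod =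
      (l.map fun j => blockForm R d L (j, 0) * blockForm R d L (j, 1)).prod := by
    simp [SProd.sprod, List.product, List.flatMap_def, List.prod_flatten, Function.comp_def]
  have hsmul := List.smul_prod
    (l.map fun j => blockForm R d L (j, (0 : Fin 2)) * blockForm R d L (j, 1)) (-2 : ℤ)
  rw [List.map_map, List.length_map] at hsmul
  rw [hpairs, hsmul]
  exact congrArg List.prod (List.map_congr_left fun j _ =>
    blockForm_sub_mul_self hd hd0 (show (j, (0 : Fin 2)) ≠ (j, 1) by simp))

theorem sum_list_prod_blockForm_apply_one {l : List K} (hl : l.Nodup) :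
    ∑ v, (l.map (blockForm R d L)).prod 1 v =
      (∑ v : K × Fin d → ZMod L, (l.map (blockWeight R)).prod v) •
        ((l.flatMap (block d)).map (covec R)).prod := by
  simp only [list_prod_blockForm hl, Module.End.mul_apply, fn_apply, thetaProd_apply_one,
    Finset.sum_smul]

end BlockForm

section Ordered

variable {R : Type*} [CommRing R] [PartialOrder R] [IsStrictOrderedRing R] {L : ℕ} [NeZero L]

theorem sum_list_prod_blockWeight_pos [Fintype K] [DecidableEq K] (hL : 4 < L) (l : List K) :
    0 < ∑ v : K × Fin d → ZMod L, (l.map (blockWeight R)).prod v := by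
  simp only [Pi.list_prod_apply, List.map_map]
  refine Finset.sum_pos' (fun v _ => ?_) ⟨fun _ => -1, Finset.mem_univ _, ?_⟩
  · exact List.prod_nonneg (List.forall_mem_map.2 fun k _ => torusWeight_nonneg hL _)
  · simp [Function.comp_def, blockWeight, torusWeight_neg_one (R := R) (by omega : 2 < L)]

end Ordered

theorem sum_list_prod_blockForm_sub_ne_zero {J R : Type*} [Fintype J] [DecidableEq J] [CommRing R]
    [LinearOrder R] [IsStrictOrderedRing R] {L : ℕ} [NeZero L] (hd : Even d) (hd0 : d ≠ 0)
    (hL : 4 < L) {l : List J} (hl : l.Nodup) :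
    ∑ v, (l.map fun j =>
      (blockForm R d L (j, (1 : Fin 2)) - blockForm R d L (j, (0 : Fin 2))) *
        (blockForm R d L (j, (1 : Fin 2)) - blockForm R d L (j, (0 : Fin 2)))).prod 1 v ≠ 0 := by
  have hnodup : (l ×ˢ [(0 : Fin 2), 1]).Nodup := hl.product (by simp)
  have hpos := sum_list_prod_blockWeight_pos (R := R) (d := d) hL (l ×ˢ [(0 : Fin 2), 1])
  obtain ⟨ψ, hψ⟩ := exists_linearMap_list_prod_covec_eq_one (R := R)
    (nodup_flatMap_block (d := d) hnodup)
  intro h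
  rw [list_prod_blockForm_sub_mul_self hd hd0] at h
  simp only [LinearMap.smul_apply, Pi.smul_apply, ← Finset.smul_sum,
    sum_list_prod_blockForm_apply_one hnodup] at h
  have hψh := congrArg ψ h
  rw [map_zsmul, map_smul, hψ, map_zero, smul_eq_zero] at hψh
  simp [hpos.ne'] at hψh

end Blocks

end FormOp

/-! ### The lower bound -/

/-- The difference of two of the points of a configuration. -/
def ConfSpace.difference {n m : ℕ} {i j : Fin n} (hij : i ≠ j) :
    C(ConfSpace n m, PuncturedSpace m) :=
  ⟨fun z => ⟨z.1 i - z.1 j, sub_ne_zero.2 (z.2.ne hij)⟩,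
    have h (i : Fin n) : Continuous fun z : ConfSpace n m => z.1 i :=
      continuous_pi (ConfSpace.continuous_coord i)
    ((h i).sub (h j)).subtype_mk _⟩

section RadialConf

variable {N m d : ℕ}

/-- The origin together with points on spheres of distinct radii around it. -/
noncomputable def radialPoint (x : Fin N → PuncturedSpace m) : Fin (N + 1) → Fin m → ℝ :=
  Fin.cons 0 fun j => ((j + 1 : ℝ) / ‖(x j).1‖) • (x j).1

theorem norm_radialPoint (x : Fin N → PuncturedSpace m) (i : Fin (N + 1)) :
    ‖radialPoint x i‖ = i := by
  cases i using Fin.cases with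
  | zero => simp [radialPoint]
  | succ j =>
    have hj : (0 : ℝ) ≤ j + 1 := by positivity
    rw [radialPoint, Fin.cons_succ, norm_smul, norm_div, norm_norm,
      div_mul_cancel₀ _ (norm_ne_zero_iff.2 (x j).2), Real.norm_of_nonneg hj]
    simp

theorem radialPoint_injective (x : Fin N → PuncturedSpace m) : Function.Injective (radialPoint x) :=
  fun i i' h => Fin.ext <| Nat.cast_injective (R := ℝ) <| by
    rw [← norm_radialPoint x i, h, norm_radialPoint]

theorem continuous_radialPoint : Continuous (radialPoint (N := N) (m := m)) := by
  refine continuous_pi fun i => ?_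
  cases i using Fin.cases with
  | zero => exact continuous_const
  | succ j =>
    have hx : Continuous fun x : Fin N → PuncturedSpace m => (x j).1 := by fun_prop
    exact (continuous_const.div hx.norm fun x => norm_ne_zero_iff.2 (x j).2).smul hx

/-- The configurations whose points lie on spheres of distinct radii around the first one. -/
noncomputable def radialConf : C(Fin N → PuncturedSpace m, ConfSpace (N + 1) m) :=
  ⟨fun x => ⟨radialPoint x, radialPoint_injective x⟩, continuous_radialPoint.subtype_mk _⟩

theorem difference_radialConf (x : Fin N → PuncturedSpace m) (j : Fin N) :
    (ConfSpace.difference (Fin.succ_ne_zero j) (radialConf x)).1 =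
      ((j + 1 : ℝ) / ‖(x j).1‖) • (x j).1 := by
  simp [ConfSpace.difference, radialConf, radialPoint]

theorem signCochain_difference_radialConf {R ι V : Type*} [CommRing R] [Fintype ι]
    [DecidableEq ι] [AddCommGroup V] (e : ι → V) (x : V → Fin N → PuncturedSpace (d + 1))
    (j : Fin N) :
    FormOp.signCochain R e
        (fun v => (ConfSpace.difference (Fin.succ_ne_zero j) (radialConf (x v))).1) =
      FormOp.signCochain R e fun v => (x v j).1 := by
  simp only [difference_radialConf]
  exact FormOp.signCochain_smul _ fun v =>
    div_pos (by positivity) (norm_pos_iff.2 (x v j).2)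

variable (N d) in
/-- A torus of pairs of configurations, on which every difference of points other than the first
one with the first one moves independently over a sphere. -/
noncomputable def confTorus :
    C((Fin N × Fin 2) × Fin d → Circle, ConfSpace (N + 1) (d + 1) × ConfSpace (N + 1) (d + 1)) :=
  let collapse (a : Fin 2) : C((Fin N × Fin 2) × Fin d → Circle, Fin N → PuncturedSpace (d + 1)) :=
    ⟨fun z j => ⟨torusCollapse fun l => z ((j, a), l), torusCollapse_ne_zero _⟩,
      continuous_pi fun j => (continuous_torusCollapse.comp (by fun_prop)).subtype_mk _⟩
  (radialConf.comp (collapse 0)).prodMk (radialConf.comp (collapse 1))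

end RadialConf

theorem tendsto_nndist_exp_one :
    Filter.Tendsto (fun L : ℕ => nndist (Circle.exp (2 * Real.pi / L)) 1) Filter.atTop (𝓝 0) := by
  have hdiv : Filter.Tendsto (fun L : ℕ => 2 * Real.pi / (L : ℝ)) Filter.atTop (𝓝 0) :=
    tendsto_const_div_atTop_nhds_zero_nat _
  have hexp : Continuous fun x : ℝ => nndist (Circle.exp x) 1 := by fun_prop
  simpa [Function.comp_def] using (hexp.tendsto 0).comp hdiv

theorem not_hasTCCover_confSpace {N d : ℕ} (hd : Even d) (hd0 : d ≠ 0) :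
    ¬HasTCCover (ConfSpace (N + 1) (d + 1)) (2 * N) := by
  intro h
  let δ : Fin N → C(ConfSpace (N + 1) (d + 1), PuncturedSpace (d + 1)) := fun j =>
    ConfSpace.difference (Fin.succ_ne_zero j)
  let l := (List.finRange N).flatMap fun j => List.replicate 2 (δ j)
  have hl : l.length = 2 * N := by simp [l, mul_comm]
  rw [← hl] at h
  have hev := h.eventually_prod_mem_coboundaries (R := ℤ) (ι := (Fin N × Fin 2) × Fin d) hd
    (confTorus N d)
  obtain ⟨L, hL, hmem⟩ :=
    ((Filter.eventually_gt_atTop 4).and (tendsto_nndist_exp_one.eventually hev)).exists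
  have : NeZero L := ⟨by omega⟩
  let y : ((Fin N × Fin 2) × Fin d → ZMod L) → (Fin N × Fin 2) × Fin d → Circle := fun v i =>
    ZMod.toCircle (v i)
  let : PseudoMetricSpace ((Fin N × Fin 2) × Fin d → ZMod L) := .induced y inferInstance
  have hsign₀ (j : Fin N) : FormOp.signCochain ℤ (FormOp.unitStep _ L)
      (fun v => (δ j (confTorus N d (y v)).1).1) = FormOp.blockForm ℤ d L (j, (0 : Fin 2)) :=
    signCochain_difference_radialConf _ _ j
  have hsign₁ (j : Fin N) : FormOp.signCochain ℤ (FormOp.unitStep _ L)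
      (fun v => (δ j (confTorus N d (y v)).2).1) = FormOp.blockForm ℤ d L (j, (1 : Fin 2)) :=
    signCochain_difference_radialConf _ _ j
  have hprod := hmem _ (FormOp.unitStep _ L) y (LipschitzWith.of_edist_le fun _ _ => le_rfl)
    FormOp.dist_toCircle_add_unitStep_le
  rw [List.map_flatMap, List.flatMap_def, List.prod_flatten, List.map_map] at hprod
  simp only [Function.comp_def, List.map_replicate, hsign₀, hsign₁, List.prod_replicate, sq]
    at hprod
  exact FormOp.sum_list_prod_blockForm_sub_ne_zero hd hd0 hL (List.nodup_finRange N)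
    (FormOp.sum_apply_one_of_mem_coboundaries _ hprod)

/-- for every odd `m ≥ 3` and `n ≥ 2`, the topological complexity of
the configuration space of `n` ordered distinct points in `ℝ^m` equals `2n - 1`. -/
theorem tc_config_space_odd (m n : ℕ) (hm : Odd m) (hm3 : 3 ≤ m) (hn : 2 ≤ n) :
    TopComplexity (ConfSpace n m) = (2 * n - 1 : ℕ) := by
  obtain ⟨d, rfl⟩ := Nat.exists_eq_add_of_le' hm3
  obtain ⟨N, rfl⟩ := Nat.exists_eq_add_of_le' (one_le_two.trans hn)
  have hd : Even (d + 2) := by grind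
  refine le_antisymm (sInf_le ⟨_, rfl, hasTCCover_confSpace (d := d + 1)⟩) (le_sInf ?_)
  rintro _ ⟨k, rfl, hk⟩
  rw [Nat.cast_le]
  by_contra! hlt
  exact not_hasTCCover_confSpace (N := N) hd (by omega) (hk.mono (by omega))
end

section
/- Let A be the Orlik–Solomon algebra of a simple matroid M of rank r on a ground set S with a fixed linear order, and let Ā = A ⊗ A be the graded tensor square with ē_s = 1⊗e_s − e_s⊗1. Suppose S is the disjoint union of sets T₁ and T₂ such that T₁ is independent and T₂ ∪ {s} is independent for every s ∈ S. Then the product π = ∏_{s∈S} ē_s is nonzero in Ā. -/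
open scoped Classical

noncomputable section OrlikSolomon

variable (K : Type*) [Field K]

/-- The generator `e_s` of the exterior algebra on the free module with basis `S`. -/
def extGen {α : Type*} (s : α) : ExteriorAlgebra K (α →₀ K) :=
  ExteriorAlgebra.ι K (Finsupp.single s 1)

/-- The degree `-1` differential `∂` of the exterior algebra (the graded derivation
with `∂ e_s = 1`), realized as contraction with the linear functional sending each
basis vector to `1`. -/
def extBoundary (α : Type*) : ExteriorAlgebra K (α →₀ K) →ₗ[K] ExteriorAlgebra K (α →₀ K) :=
  CliffordAlgebra.contractLeft (Finsupp.linearCombination K fun _ : α => (1 : K))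

/-- The relations of the Orlik–Solomon algebra of the matroid `Mat`: all elements
`∂(e_{s₁} ∧ ⋯ ∧ e_{s_p})` for dependent subsets `{s₁, …, s_p}` are set to zero. -/
def osRel {α : Type*} (Mat : Matroid α) :
    ExteriorAlgebra K (α →₀ K) → ExteriorAlgebra K (α →₀ K) → Prop :=
  fun x y => y = 0 ∧ ∃ (p : ℕ) (f : Fin p → α), Function.Injective f ∧
    ¬ Mat.Indep (Set.range f) ∧
    x = extBoundary K α (List.ofFn fun i => extGen K (f i)).prod

/-- The Orlik–Solomon algebra of the matroid `Mat` over `K`. -/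
abbrev OSAlgebra {α : Type*} (Mat : Matroid α) := RingQuot (osRel K Mat)

/-- The generator `e_s` of the Orlik–Solomon algebra. -/
def osE {α : Type*} (Mat : Matroid α) (s : α) : OSAlgebra K Mat :=
  RingQuot.mkRingHom (osRel K Mat) (extGen K s)

/-- The ordered monomial `m(T) = e_{t₁} ⋯ e_{t_p}` associated to a tuple `T`. -/
def osMonomial {α : Type*} (Mat : Matroid α) {p : ℕ} (T : Fin p → α) : OSAlgebra K Mat :=
  (List.ofFn fun i => osE K Mat (T i)).prod

end OrlikSolomon

noncomputable section

variable (K : Type*) [Field K]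

/-- The graded tensor square `Ā = A ⊗ A` of the Orlik–Solomon algebra, with its
sign-twisted (Koszul) multiplication, realized concretely as the quotient of the
exterior algebra on two copies of the ground set by the Orlik–Solomon relations of
each factor (for exterior-type algebras, `Λ(V) ⊗̂ Λ(V) ≅ Λ(V ⊕ V)`). -/
def osRel₂ {α : Type*} (Mat : Matroid α) :
    ExteriorAlgebra K ((α ⊕ α) →₀ K) → ExteriorAlgebra K ((α ⊕ α) →₀ K) → Prop :=
  fun x y => y = 0 ∧ ∃ (p : ℕ) (f : Fin p → α), Function.Injective f ∧
    ¬ Mat.Indep (Set.range f) ∧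
    (x = extBoundary K (α ⊕ α) (List.ofFn fun i => extGen K (Sum.inl (f i))).prod ∨
     x = extBoundary K (α ⊕ α) (List.ofFn fun i => extGen K (Sum.inr (f i))).prod)

/-- The graded tensor square of the Orlik–Solomon algebra. -/
abbrev OSTensorSquare {α : Type*} (Mat : Matroid α) := RingQuot (osRel₂ K Mat)

/-- The zero divisor `ē_s = 1 ⊗ e_s - e_s ⊗ 1` of the graded tensor square. -/
def osEbar {α : Type*} (Mat : Matroid α) (s : α) : OSTensorSquare K Mat :=
  RingQuot.mkRingHom (osRel₂ K Mat) (extGen K (Sum.inr s) - extGen K (Sum.inl s))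

/-!
Colour the ground set so that every set of elements with distinct colours is independent. In a
dependent set `D` two elements then share a colour, so replacing each generator by its colour sends
`e_D` to zero; as this substitution commutes with `∂`, it kills `∂ e_D` as well. Two such colourings
`c₁`, `c₂` therefore define a homomorphism from the tensor square to the exterior algebra on the
two sets of colours, and it takes `ē_s` to the vector `c₂ s - c₁ s`.

A finite independent set `T = {t₁, …, tₙ}` yields such a colouring by the steps of the flag of
flats `cl {t₁} ⊆ cl {t₁, t₂} ⊆ ⋯ ⊆ cl T`: the colour of `s` is the `tᵢ` at which `s` enters the
flag, or `none` if `s ∉ cl T`. For the colourings coming from `T₁` and `T₂`, the vectors are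
`none - s` for `s ∈ T₁`, as `s ∉ cl T₂`, and `s - c₁ s` for `s ∈ T₂`. They are linearly
independent, so their product in the exterior algebra is not zero.
-/

section IndepColoring

variable {α β : Type*} {M : Matroid α}

/-- A colouring of the ground set of a matroid all of whose rainbow sets (sets on which the
colouring is injective) are independent. Its colour classes form an independent partition in the
sense of Orlik and Terao. -/
def IsIndepColoring (M : Matroid α) (c : α → β) : Prop :=
  ∀ ⦃C : Set α⦄, Set.InjOn c C → M.Indep C

lemma IsIndepColoring.subset_ground {c : α → β} (hc : IsIndepColoring M c) (C : Set α) :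
    C ⊆ M.E :=
  fun s _ => (hc (Set.injOn_singleton c s)).subset_ground rfl

lemma IsIndepColoring.not_injective_comp {ι : Type*} {c : α → β} (hc : IsIndepColoring M c)
    {f : ι → α} (hf : ¬ M.Indep (Set.range f)) : ¬ Function.Injective (c ∘ f) :=
  fun h => hf (hc h.injOn_range)

lemma isIndepColoring_const (hM : ∀ s, M.IsNonloop s) (b : β) :
    IsIndepColoring M fun _ => b := by
  intro C hC
  have hsub : C.Subsingleton := fun s hs t ht => hC hs ht rfl
  rcases hsub.eq_empty_or_singleton with rfl | ⟨s, rfl⟩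
  · exact M.empty_indep
  · exact Matroid.indep_singleton.2 (hM s)

lemma indep_of_indep_inter_closure {C X : Set α} (hC : C ⊆ M.E)
    (hind : M.Indep (C ∩ M.closure X)) (hsub : (C \ M.closure X).Subsingleton) : M.Indep C := by
  rcases hsub.eq_empty_or_singleton with hempty | ⟨b, hb⟩
  · rwa [Set.inter_eq_left.2 (Set.sdiff_eq_empty.1 hempty)] at hind
  · obtain ⟨hbC, hbX⟩ : b ∈ C \ M.closure X := hb ▸ Set.mem_singleton b
    rw [← Set.inter_union_sdiff C (M.closure X), hb, Set.union_singleton]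
    refine hind.insert_indep_iff.2 (.inl ⟨hC hbC, fun hcl => hbX ?_⟩)
    exact M.closure_subset_closure_of_subset_closure Set.inter_subset_right hcl

lemma IsIndepColoring.ite_mem_closure {c : α → Option β} (hc : IsIndepColoring M c)
    {X Y : Set α} (hXY : X ⊆ Y) (hX : ∀ s ∉ M.closure X, c s = none) (b : β) :
    IsIndepColoring M fun s => if s ∈ M.closure Y \ M.closure X then some b else c s := by
  intro C hC
  -- `C` has at most one element in `cl Y \ cl X`, of colour `b`, and at most one outside `cl Y`,
  -- of colour `none`.
  have hcl : M.closure X ⊆ M.closure Y := M.closure_subset_closure hXY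
  have hindX : M.Indep (C ∩ M.closure X) :=
    hc fun s hs t ht hst => hC hs.1 ht.1 (by simpa [hs.2, ht.2] using hst)
  have hindY : M.Indep (C ∩ M.closure Y) := by
    refine indep_of_indep_inter_closure (X := X) (hc.subset_ground _) ?_ ?_
    · rwa [Set.inter_assoc, Set.inter_eq_right.2 hcl]
    · exact fun s hs t ht => hC hs.1.1 ht.1.1 (by simp [hs.1.2, hs.2, ht.1.2, ht.2])
  refine indep_of_indep_inter_closure (hc.subset_ground C) hindY fun s hs t ht => ?_
  have hsX : s ∉ M.closure X := fun h => hs.2 (hcl h)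
  have htX : t ∉ M.closure X := fun h => ht.2 (hcl h)
  exact hC hs.1 ht.1 (by simp [hs.2, ht.2, hX s hsX, hX t htX])

lemma exists_isIndepColoring (hM : ∀ s, M.IsNonloop s) {T : Set α} (hfin : T.Finite)
    (hT : M.Indep T) :
    ∃ c : α → Option α, IsIndepColoring M c ∧ (∀ t ∈ T, c t = some t) ∧
      ∀ s ∉ M.closure T, c s = none := by
  induction T, hfin using Set.Finite.induction_on with
  | empty => exact ⟨fun _ => none, isIndepColoring_const hM none, by simp, by simp⟩
  | @insert a T ha _ ih =>
    have hTind : M.Indep T := hT.subset (Set.subset_insert a T)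
    have hacl : a ∉ M.closure T := ((hTind.insert_indep_iff_of_notMem ha).1 hT).2
    obtain ⟨c, hc, hcT, hnone⟩ := ih hTind
    refine ⟨_, hc.ite_mem_closure (Set.subset_insert a T) hnone a, ?_, fun s hs => ?_⟩
    · have haT : a ∈ M.closure (insert a T) :=
        M.mem_closure_of_mem (Set.mem_insert a T) hT.subset_ground
      have hTcl : T ⊆ M.closure T := M.subset_closure T hTind.subset_ground
      rintro t (rfl | ht)
      · simp [haT, hacl]
      · simp [hTcl ht, hcT t ht]
    · have hsT : s ∉ M.closure T := fun h =>
        hs (M.closure_subset_closure (Set.subset_insert a T) h)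
      simp [hs, hnone s hsT]

end IndepColoring

section Exterior

lemma map_contractLeft {R V W : Type*} [CommRing R] [AddCommGroup V] [Module R V]
    [AddCommGroup W] [Module R W] {Q : QuadraticForm R V} {Q' : QuadraticForm R W}
    (f : Q →qᵢ Q') (d : Module.Dual R W) (x : CliffordAlgebra Q) :
    CliffordAlgebra.map f (CliffordAlgebra.contractLeft (d ∘ₗ f.toLinearMap) x) =
      CliffordAlgebra.contractLeft d (CliffordAlgebra.map f x) := by
  induction x using CliffordAlgebra.left_induction with
  | algebraMap r => simp
  | add x y hx hy => simp only [map_add, hx, hy]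
  | ι_mul x v hx => simp [CliffordAlgebra.contractLeft_ι_mul, hx]

lemma ιMulti_ne_zero {V : Type*} [AddCommGroup V] [Module K V] {n : ℕ} {v : Fin n → V}
    (hv : LinearIndependent K v) : ExteriorAlgebra.ιMulti K n v ≠ 0 := by
  have hfamily := exteriorPower.ιMulti_family_linearIndependent_field (n := n) hv
  have hne := hfamily.ne_zero (Set.powersetCard.ofFinEmbEquiv (RelEmbedding.refl (· ≤ ·)))
  intro h
  exact hne (Subtype.ext (by simpa [exteriorPower.ιMulti_family, Function.comp_def] using h))

lemma list_prod_map_ι_ne_zero {ι V : Type*} [AddCommGroup V] [Module K V] {v : ι → V}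
    {l : List ι} (hl : l.Nodup) (hv : LinearIndepOn K v {i | i ∈ l}) :
    (l.map fun i => ExteriorAlgebra.ι K (v i)).prod ≠ 0 := by
  have hlin : LinearIndependent K fun i : Fin l.length => v (l.get i) :=
    LinearIndependent.comp hv (fun i => ⟨l.get i, l.get_mem i⟩)
      fun i j hij => hl.injective_get (congrArg Subtype.val hij)
  have hwedge : ExteriorAlgebra.ιMulti K l.length (fun i => v (l.get i)) ≠ 0 :=
    ιMulti_ne_zero K hlin
  rw [ExteriorAlgebra.ιMulti_apply] at hwedge
  rwa [← List.ofFn_get l, List.map_ofFn]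

variable {α β : Type*}

lemma map_extBoundary (φ : α → β) (x : ExteriorAlgebra K (α →₀ K)) :
    ExteriorAlgebra.map (Finsupp.lmapDomain K K φ) (extBoundary K α x) =
      extBoundary K β (ExteriorAlgebra.map (Finsupp.lmapDomain K K φ) x) := by
  have hcomp : (Finsupp.linearCombination K fun _ : α => (1 : K)) =
      (Finsupp.linearCombination K fun _ : β => (1 : K)) ∘ₗ Finsupp.lmapDomain K K φ := by
    ext; simp
  rw [extBoundary, hcomp]
  exact map_contractLeft _ _ x

lemma map_extGen (φ : α → β) (a : α) :
    ExteriorAlgebra.map (Finsupp.lmapDomain K K φ) (extGen K a) = extGen K (φ a) := by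
  simp [extGen]

lemma prod_ofFn_extGen_eq_zero {p : ℕ} {f : Fin p → α} (hf : ¬ Function.Injective f) :
    (List.ofFn fun i => extGen K (f i)).prod = 0 := by
  have hinj : ¬ Function.Injective fun i => Finsupp.single (f i) (1 : K) :=
    fun h => hf (Function.Injective.of_comp (f := fun a => Finsupp.single a (1 : K)) h)
  have hwedge := ExteriorAlgebra.ιMulti_eq_zero_of_not_inj (R := K) hinj
  rwa [ExteriorAlgebra.ιMulti_apply] at hwedge

lemma map_extBoundary_prod_eq_zero (φ : α → β) {p : ℕ} {f : Fin p → α}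
    (hf : ¬ Function.Injective (φ ∘ f)) :
    ExteriorAlgebra.map (Finsupp.lmapDomain K K φ)
      (extBoundary K α (List.ofFn fun i => extGen K (f i)).prod) = 0 := by
  have hprod : ExteriorAlgebra.map (Finsupp.lmapDomain K K φ)
      (List.ofFn fun i => extGen K (f i)).prod = 0 := by
    simpa only [map_list_prod, List.map_ofFn, Function.comp_def, map_extGen]
      using prod_ofFn_extGen_eq_zero K hf
  rw [map_extBoundary, hprod, map_zero]

end Exterior

section TensorSquare

variable {α β γ : Type*} {M : Matroid α} {c₁ : α → β} {c₂ : α → γ}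

lemma map_eq_zero_of_osRel₂ (h₁ : IsIndepColoring M c₁) (h₂ : IsIndepColoring M c₂)
    {x y : ExteriorAlgebra K ((α ⊕ α) →₀ K)} (hxy : osRel₂ K M x y) :
    ExteriorAlgebra.map (Finsupp.lmapDomain K K (Sum.map c₁ c₂)) x = 0 := by
  obtain ⟨-, p, f, -, hdep, rfl | rfl⟩ := hxy
  · exact map_extBoundary_prod_eq_zero K _ fun h => h₁.not_injective_comp hdep
      (Function.Injective.of_comp (f := Sum.inl) h)
  · exact map_extBoundary_prod_eq_zero K _ fun h => h₂.not_injective_comp hdep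
      (Function.Injective.of_comp (f := Sum.inr) h)

/-- The homomorphism from the graded tensor square of the Orlik–Solomon algebra to the exterior
algebra on the colours that replaces the generators of the first factor by their colours under `c₁`
and those of the second by their colours under `c₂`. -/
def osTensorSquareToExterior (h₁ : IsIndepColoring M c₁) (h₂ : IsIndepColoring M c₂) :
    OSTensorSquare K M →+* ExteriorAlgebra K ((β ⊕ γ) →₀ K) :=
  RingQuot.lift ⟨(ExteriorAlgebra.map (Finsupp.lmapDomain K K (Sum.map c₁ c₂))).toRingHom,
    fun x _ hxy => (map_eq_zero_of_osRel₂ K h₁ h₂ hxy).trans (by simp [hxy.1])⟩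

lemma osTensorSquareToExterior_osEbar (h₁ : IsIndepColoring M c₁) (h₂ : IsIndepColoring M c₂)
    (s : α) :
    osTensorSquareToExterior K h₁ h₂ (osEbar K M s) =
      ExteriorAlgebra.ι K (Finsupp.single (.inr (c₂ s)) 1 - Finsupp.single (.inl (c₁ s)) 1) := by
  refine (RingQuot.lift_mkRingHom_apply (ExteriorAlgebra.map _).toRingHom _ _).trans ?_
  simp [extGen]

lemma osEbar_prod_ne_zero_of_linearIndepOn (h₁ : IsIndepColoring M c₁)
    (h₂ : IsIndepColoring M c₂) {l : List α} (hl : l.Nodup)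
    (hv : LinearIndepOn K (fun s => (Finsupp.single (.inr (c₂ s)) 1 -
      Finsupp.single (.inl (c₁ s)) 1 : (β ⊕ γ) →₀ K)) {s | s ∈ l}) :
    (l.map fun s => osEbar K M s).prod ≠ 0 := by
  intro hzero
  have himage := congrArg (osTensorSquareToExterior K h₁ h₂) hzero
  simp only [map_list_prod, List.map_map, Function.comp_def, osTensorSquareToExterior_osEbar,
    map_zero] at himage
  exact list_prod_map_ι_ne_zero K hl hv himage

end TensorSquare

lemma linearIndepOn_single_inr_sub_single_inl {R α : Type*} [Ring R] {c₁ c₂ : α → Option α}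
    {S : Set α} (hc : ∀ s ∈ S, c₂ s = some s ∨ c₂ s = none ∧ c₁ s = some s) :
    LinearIndepOn R (fun s => (Finsupp.single (.inr (c₂ s)) 1 -
      Finsupp.single (.inl (c₁ s)) 1 : (Option α ⊕ Option α) →₀ R)) S := by
  let X : Option α → α →₀ R := fun o => o.elim 0 fun a => Finsupp.single a 1
  let Y : Option α → α →₀ R := fun o => o.elim 0 fun a => Finsupp.single a 1 - X (c₁ a)
  let G : ((Option α ⊕ Option α) →₀ R) →ₗ[R] (α →₀ R) :=
    Finsupp.linearCombination R (Sum.elim (-X) Y)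
  have hG : ∀ s ∈ S, G (Finsupp.single (.inr (c₂ s)) 1 - Finsupp.single (.inl (c₁ s)) 1) =
      Finsupp.single s 1 := by
    intro s hs
    rcases hc s hs with h₂ | ⟨h₂, h₁⟩
    · simp [G, Y, h₂]
    · simp [G, X, Y, h₁, h₂]
  refine LinearIndependent.of_comp G ?_
  convert (Finsupp.linearIndependent_single_one R α).comp ((↑) : S → α) Subtype.val_injective
    using 1
  exact funext fun s => hG s s.2

theorem osEbar_prod_ne_zero_general {α : Type*} (M : Matroid α) (hM : ∀ s, M.IsNonloop s)
    {T₁ T₂ : Set α} (hT₁ : M.Indep T₁) (hT₂ : ∀ s ∈ T₁ ∪ T₂, M.Indep (T₂ ∪ {s}))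
    {l : List α} (hl : l.Nodup) (hlT : ∀ s ∈ l, s ∈ T₁ ∪ T₂) :
    (l.map fun s => osEbar K M s).prod ≠ 0 := by
  have hT₂_indep : M.Indep T₂ := by
    rcases T₂.eq_empty_or_nonempty with rfl | ⟨t, ht⟩
    · exact M.empty_indep
    · exact (hT₂ t (.inr ht)).subset Set.subset_union_left
  have hfin (T : Set α) : (T ∩ {s | s ∈ l}).Finite := l.finite_toSet.subset Set.inter_subset_right
  obtain ⟨c₁, hc₁, hsome₁, -⟩ :=
    exists_isIndepColoring hM (hfin T₁) (hT₁.subset Set.inter_subset_left)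
  obtain ⟨c₂, hc₂, hsome₂, hnone₂⟩ :=
    exists_isIndepColoring hM (hfin T₂) (hT₂_indep.subset Set.inter_subset_left)
  refine osEbar_prod_ne_zero_of_linearIndepOn K hc₁ hc₂ hl
    (linearIndepOn_single_inr_sub_single_inl fun s hs => ?_)
  by_cases hsT₂ : s ∈ T₂
  · exact .inl (hsome₂ s ⟨hsT₂, hs⟩)
  · have hsT₁ : s ∈ T₁ := (hlT s hs).resolve_right hsT₂
    have hs_indep : M.Indep (insert s T₂) := Set.union_singleton ▸ hT₂ s (.inl hsT₁)
    have hscl : s ∉ M.closure T₂ := ((hT₂_indep.insert_indep_iff_of_notMem hsT₂).1 hs_indep).2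
    have hscl' : s ∉ M.closure (T₂ ∩ {s | s ∈ l}) :=
      fun h => hscl (M.closure_subset_closure Set.inter_subset_left h)
    exact .inr ⟨hnone₂ s hscl', hsome₁ s ⟨hsT₁, hs⟩⟩

/-- let `Mat` be a simple matroid on the (linearly ordered, finite)
ground set `S = α`.  If `S` is the disjoint union of `T₁` and `T₂` where `T₁` is
independent and `T₂ ∪ {s}` is independent for every `s ∈ S`, then the product
`π = ∏_{s ∈ S} ē_s` (taken in the fixed order on `S`) is nonzero in the graded
tensor square `Ā = A ⊗ A`. -/
theorem osEbar_prod_ne_zero {α : Type*} [Fintype α] [LinearOrder α]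
    (Mat : Matroid α) (hE : Mat.E = Set.univ)
    (hsimple : ∀ s t : α, Mat.Indep {s, t})
    (T₁ T₂ : Set α) (hdisj : Disjoint T₁ T₂) (hunion : T₁ ∪ T₂ = Set.univ)
    (hT₁ : Mat.Indep T₁) (hT₂ : ∀ s : α, Mat.Indep (T₂ ∪ {s})) :
    ((Finset.univ.sort (· ≤ ·)).map fun s => osEbar K Mat s).prod ≠ 0 :=
  osEbar_prod_ne_zero_general K Mat
    (fun s => Matroid.indep_singleton.1 (by simpa using hsimple s s)) hT₁ (fun s _ => hT₂ s)
    (Finset.sort_nodup _ _) fun s _ => hunion ▸ Set.mem_univ s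

end
end
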